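/- arXiv:math/0610023 — 9 statements merged into one kernel-verified Lean document; each statement's English description precedes it below -/
import Mathlib

section
/- Let Γ be a connected cubic graph of order n. Then n/2 ≤ γ_ô(Γ) ≤ 3n/4, where γ_ô(Γ) is the global strong offensive alliance number of Γ. -/
/-- A nonempty set `S` of vertices is a *global strong offensive alliance* if every vertex
outside `S` has at least two more neighbors inside `S` than outside `S`. -/
def SimpleGraph.IsGlobalStrongOffensiveAlliance {V : Type*} (G : SimpleGraph V) (S : Set V) :
    Prop :=
  S.Nonempty ∧ ∀ v ∉ S, (G.neighborSet v \ S).ncard + 2 ≤ (G.neighborSet v ∩ S).ncard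

/-- The *global strong offensive alliance number*: the minimum cardinality of a global strong
offensive alliance. -/
noncomputable def SimpleGraph.globalStrongOffensiveAllianceNum {V : Type*} (G : SimpleGraph V) :
    ℕ :=
  sInf {k | ∃ S : Set V, G.IsGlobalStrongOffensiveAlliance S ∧ S.ncard = k}

/-! Double counting the edges between `S` and its complement shows that a set in which every outside
vertex has at least `k` neighbors satisfies `k |Sᶜ| ≤ Δ |S|`. An outside vertex of an alliance has
at least `⌈δ / 2⌉ + 1` neighbors inside, which gives the lower bound. For the upper bound, if
`2 ≤ δ` then the complement of an independent set is an alliance, and a maximal independent set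
dominates the graph, so the count with `k = 1` makes it large. -/

section

variable {V : Type*} {G : SimpleGraph V} {S I : Set V} {v : V}

theorem ncard_neighborSet_eq_degree (G : SimpleGraph V) (v : V) [Fintype (G.neighborSet v)] :
    (G.neighborSet v).ncard = G.degree v := by
  rw [Set.ncard_eq_toFinset_card', SimpleGraph.degree, SimpleGraph.neighborFinset]

theorem nontrivial_of_minDegree_ne_zero [Fintype V] [DecidableRel G.Adj] (hδ : G.minDegree ≠ 0) :
    Nontrivial V := by
  contrapose! hδ
  exact G.minDegree_of_subsingleton

theorem mul_ncard_compl_le_maxDegree_mul_ncard [Fintype V] [DecidableRel G.Adj] {k : ℕ}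
    (hS : ∀ v ∉ S, k ≤ (G.neighborSet v ∩ S).ncard) :
    k * Sᶜ.ncard ≤ G.maxDegree * S.ncard := by
  classical
  have hout : ∀ v ∈ Sᶜ.toFinset, k ≤ (S.toFinset.bipartiteAbove G.Adj v).card := by
    intro v hv
    convert hS v (by simpa using hv) using 1
    rw [Set.ncard_eq_toFinset_card']
    congr 1
    ext w
    simp [and_comm]
  have hin : ∀ w ∈ S.toFinset, (Sᶜ.toFinset.bipartiteBelow G.Adj w).card ≤ G.maxDegree := by
    refine fun w _ ↦ le_trans (Finset.card_le_card fun v hv ↦ ?_) (G.degree_le_maxDegree w)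
    exact (G.mem_neighborFinset w v).2 ((Finset.mem_bipartiteBelow G.Adj).1 hv).2.symm
  simpa only [Set.ncard_eq_toFinset_card', mul_comm] using
    Finset.card_mul_le_card_mul G.Adj hout hin

theorem isGlobalStrongOffensiveAlliance_univ [Nonempty V] (G : SimpleGraph V) :
    G.IsGlobalStrongOffensiveAlliance Set.univ :=
  ⟨Set.univ_nonempty, fun v hv ↦ absurd (Set.mem_univ v) hv⟩

theorem exists_ncard_eq_globalStrongOffensiveAllianceNum [Nonempty V] (G : SimpleGraph V) :
    ∃ S, G.IsGlobalStrongOffensiveAlliance S ∧ S.ncard = G.globalStrongOffensiveAllianceNum :=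
  Nat.sInf_mem (s := {k | ∃ S : Set V, G.IsGlobalStrongOffensiveAlliance S ∧ S.ncard = k})
    ⟨_, Set.univ, isGlobalStrongOffensiveAlliance_univ G, rfl⟩

theorem globalStrongOffensiveAllianceNum_le_ncard (hS : G.IsGlobalStrongOffensiveAlliance S) :
    G.globalStrongOffensiveAllianceNum ≤ S.ncard :=
  Nat.sInf_le ⟨S, hS, rfl⟩

-- In natural-number division, `(d + 3) / 2` is `⌈d / 2⌉ + 1`.
theorem degree_add_three_div_two_le_ncard_neighborSet_inter [Fintype (G.neighborSet v)]
    (hS : G.IsGlobalStrongOffensiveAlliance S) (hv : v ∉ S) :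
    (G.degree v + 3) / 2 ≤ (G.neighborSet v ∩ S).ncard := by
  have hsplit := Set.ncard_inter_add_ncard_sdiff_eq_ncard (G.neighborSet v) S (Set.toFinite _)
  rw [ncard_neighborSet_eq_degree] at hsplit
  have halliance := hS.2 v hv
  omega

theorem minDegree_add_three_div_two_mul_card_le [Fintype V] [Nonempty V] (G : SimpleGraph V)
    [DecidableRel G.Adj] :
    (G.minDegree + 3) / 2 * Fintype.card V ≤
      ((G.minDegree + 3) / 2 + G.maxDegree) * G.globalStrongOffensiveAllianceNum := by
  obtain ⟨S, hS, hcard⟩ := exists_ncard_eq_globalStrongOffensiveAllianceNum G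
  have hcount : (G.minDegree + 3) / 2 * Sᶜ.ncard ≤ G.maxDegree * S.ncard := by
    refine mul_ncard_compl_le_maxDegree_mul_ncard fun v hv ↦ ?_
    have hmin := G.minDegree_le_degree v
    exact le_trans (by gcongr) (degree_add_three_div_two_le_ncard_neighborSet_inter hS hv)
  rw [← hcard, ← Nat.card_eq_fintype_card, ← Set.ncard_add_ncard_compl S]
  linarith

theorem isGlobalStrongOffensiveAlliance_compl_of_isIndepSet [Nonempty V] (hI : G.IsIndepSet I)
    (hdeg : ∀ v ∈ I, 2 ≤ (G.neighborSet v).ncard) : G.IsGlobalStrongOffensiveAlliance Iᶜ := by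
  have hsub : ∀ v ∈ I, G.neighborSet v ⊆ Iᶜ := fun v hv w hvw hw ↦ hI hv hw hvw.ne hvw
  refine ⟨?_, fun v hv ↦ ?_⟩
  · rcases I.eq_empty_or_nonempty with rfl | ⟨v, hv⟩
    · simp
    · have hpos : 0 < (G.neighborSet v).ncard := zero_lt_two.trans_le (hdeg v hv)
      exact (Set.nonempty_of_ncard_ne_zero hpos.ne').mono (hsub v hv)
  · rw [Set.notMem_compl_iff] at hv
    rw [Set.sdiff_eq_empty.2 (hsub v hv), Set.inter_eq_left.2 (hsub v hv), Set.ncard_empty,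
      zero_add]
    exact hdeg v hv

theorem exists_adj_of_maximal_isIndepSet (hI : Maximal G.IsIndepSet I) (hv : v ∉ I) :
    ∃ u ∈ I, G.Adj v u := by
  by_contra! hnone
  have hinsert : G.IsIndepSet (insert v I) :=
    hI.prop.insert fun u hu _ ↦ ⟨hnone u hu, fun huv ↦ hnone u hu huv.symm⟩
  exact hv (hI.mem_of_prop_insert hinsert)

theorem ncard_compl_le_maxDegree_mul_ncard_of_maximal_isIndepSet [Fintype V] [DecidableRel G.Adj]
    (hI : Maximal G.IsIndepSet I) : Iᶜ.ncard ≤ G.maxDegree * I.ncard := by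
  rw [← one_mul Iᶜ.ncard]
  refine mul_ncard_compl_le_maxDegree_mul_ncard fun v hv ↦ ?_
  obtain ⟨u, hu, hvu⟩ := exists_adj_of_maximal_isIndepSet hI hv
  exact (Set.ncard_pos (Set.toFinite _)).2 ⟨u, hvu, hu⟩

theorem maxDegree_add_one_mul_globalStrongOffensiveAllianceNum_le [Fintype V] [DecidableRel G.Adj]
    (hδ : 2 ≤ G.minDegree) :
    (G.maxDegree + 1) * G.globalStrongOffensiveAllianceNum ≤ G.maxDegree * Fintype.card V := by
  have := nontrivial_of_minDegree_ne_zero (by omega : G.minDegree ≠ 0)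
  obtain ⟨I, -, hI⟩ := Finite.exists_le_maximal (p := G.IsIndepSet) (a := ∅) (by simp)
  have hcount := ncard_compl_le_maxDegree_mul_ncard_of_maximal_isIndepSet hI
  have halliance : G.IsGlobalStrongOffensiveAlliance Iᶜ :=
    isGlobalStrongOffensiveAlliance_compl_of_isIndepSet hI.prop fun v _ ↦
      ncard_neighborSet_eq_degree G v ▸ hδ.trans (G.minDegree_le_degree v)
  calc (G.maxDegree + 1) * G.globalStrongOffensiveAllianceNum
      ≤ (G.maxDegree + 1) * Iᶜ.ncard := by
        gcongr
        exact globalStrongOffensiveAllianceNum_le_ncard halliance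
    _ ≤ G.maxDegree * (I.ncard + Iᶜ.ncard) := by linarith
    _ = G.maxDegree * Fintype.card V := by
        rw [Set.ncard_add_ncard_compl, Nat.card_eq_fintype_card]

end

theorem stmt_0_general {V : Type*} [Fintype V] (G : SimpleGraph V) [DecidableRel G.Adj]
    (hδ : 2 ≤ G.minDegree) :
    (G.minDegree + 3) / 2 * Fintype.card V ≤
        ((G.minDegree + 3) / 2 + G.maxDegree) * G.globalStrongOffensiveAllianceNum ∧
      (G.maxDegree + 1) * G.globalStrongOffensiveAllianceNum ≤ G.maxDegree * Fintype.card V := by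
  have := nontrivial_of_minDegree_ne_zero (by omega : G.minDegree ≠ 0)
  exact ⟨minDegree_add_three_div_two_mul_card_le G,
    maxDegree_add_one_mul_globalStrongOffensiveAllianceNum_le hδ⟩

theorem stmt_0 {V : Type*} [Fintype V] (G : SimpleGraph V)
    (hconn : G.Connected) (hcubic : ∀ v : V, (G.neighborSet v).ncard = 3) :
    (Fintype.card V : ℝ) / 2 ≤ G.globalStrongOffensiveAllianceNum ∧
      (G.globalStrongOffensiveAllianceNum : ℝ) ≤ 3 * Fintype.card V / 4 := by
  classical
  have := hconn.nonempty
  have hreg : G.IsRegularOfDegree 3 := fun v ↦ ncard_neighborSet_eq_degree G v ▸ hcubic v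
  have hbounds := stmt_0_general G (by simp [hreg.minDegree_eq])
  rw [hreg.minDegree_eq, hreg.maxDegree_eq] at hbounds
  rify at hbounds
  constructor <;> linarith
end

section
/- Let Γ=(V,E) be a connected cubic graph of order n. A set S ⊆ V is a global strong offensive alliance in Γ if and only if S is a 3-dominating set of Γ; consequently γ_ô(Γ) = n − α(Γ), where γ_ô(Γ) is the global strong offensive alliance number and α(Γ) is the independence number of Γ. -/
/-- A set `S` is a *`k`-dominating set* if every vertex outside `S` has at least `k`
neighbors in `S`. -/
def SimpleGraph.IsKDominating {V : Type*} (G : SimpleGraph V) (k : ℕ) (S : Set V) : Prop :=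
  ∀ v ∉ S, k ≤ (G.neighborSet v ∩ S).ncard

/-- A set of vertices is *independent* if its elements are pairwise nonadjacent. -/
def SimpleGraph.IsIndepVertexSet {V : Type*} (G : SimpleGraph V) (S : Set V) : Prop :=
  S.Pairwise fun u v => ¬ G.Adj u v

/-- The *independence number*: the maximum cardinality of an independent set of vertices. -/
noncomputable def SimpleGraph.indepNumber {V : Type*} (G : SimpleGraph V) : ℕ :=
  sSup {k | ∃ S : Set V, G.IsIndepVertexSet S ∧ S.ncard = k}

/-!
If `v` has degree `2` or `3`, then a single neighbor of `v` outside `S` already violates the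
alliance inequality at `v`, so this inequality says that all neighbors of `v` lie in `S`. Hence the
global strong offensive alliances are exactly the vertex covers, and in a `d`-regular graph so are
the `d`-dominating sets. Vertex covers are the complements of independent sets, so a smallest one
has `n - α` vertices.
-/

theorem ncard_le_ncard_inter_iff_subset {α : Type*} {s t : Set α} (hs : s.Finite) :
    s.ncard ≤ (s ∩ t).ncard ↔ s ⊆ t := by
  refine ⟨fun h ↦ ?_, fun h ↦ by rw [Set.inter_eq_left.mpr h]⟩
  exact Set.inter_eq_left.mp (Set.eq_of_subset_of_ncard_le Set.inter_subset_left h hs)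

theorem ncard_sdiff_add_two_le_ncard_inter_iff_subset {α : Type*} {s t : Set α}
    (hs : s.ncard = 2 ∨ s.ncard = 3) :
    (s \ t).ncard + 2 ≤ (s ∩ t).ncard ↔ s ⊆ t := by
  have hfin : s.Finite := Set.finite_of_ncard_ne_zero (by lia)
  have hsplit : (s ∩ t).ncard + (s \ t).ncard = s.ncard :=
    Set.ncard_inter_add_ncard_sdiff_eq_ncard s t hfin
  rw [← ncard_le_ncard_inter_iff_subset hfin]
  lia

section

variable {V : Type*} {G : SimpleGraph V}

theorem isVertexCover_iff_forall_neighborSet_subset {S : Set V} :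
    G.IsVertexCover S ↔ ∀ v ∉ S, G.neighborSet v ⊆ S :=
  ⟨fun h _ hv _ hvw ↦ (h hvw).resolve_left hv,
    fun h v _ hvw ↦ or_iff_not_imp_left.mpr fun hv ↦ h v hv hvw⟩

theorem isKDominating_iff_isVertexCover {d : ℕ} (hfin : ∀ v, (G.neighborSet v).Finite)
    (hreg : ∀ v, (G.neighborSet v).ncard = d) {S : Set V} :
    G.IsKDominating d S ↔ G.IsVertexCover S := by
  rw [isVertexCover_iff_forall_neighborSet_subset]
  refine forall₂_congr fun v _ ↦ ?_
  rw [← ncard_le_ncard_inter_iff_subset (hfin v), hreg]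

theorem isGlobalStrongOffensiveAlliance_iff_isVertexCover [Nonempty V]
    (hdeg : ∀ v, (G.neighborSet v).ncard = 2 ∨ (G.neighborSet v).ncard = 3) {S : Set V} :
    G.IsGlobalStrongOffensiveAlliance S ↔ G.IsVertexCover S := by
  have nonempty_of_isVertexCover (hS : G.IsVertexCover S) : S.Nonempty := by
    obtain ⟨v⟩ := ‹Nonempty V›
    obtain ⟨w, hvw⟩ : (G.neighborSet v).Nonempty :=
      Set.nonempty_of_ncard_ne_zero (by have := hdeg v; lia)
    exact (hS hvw).elim (fun hv ↦ ⟨v, hv⟩) fun hw ↦ ⟨w, hw⟩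
  have alliance_ineq_iff : (∀ v ∉ S, (G.neighborSet v \ S).ncard + 2 ≤
      (G.neighborSet v ∩ S).ncard) ↔ G.IsVertexCover S := by
    rw [isVertexCover_iff_forall_neighborSet_subset]
    exact forall₂_congr fun v _ ↦ ncard_sdiff_add_two_le_ncard_inter_iff_subset (hdeg v)
  rw [SimpleGraph.IsGlobalStrongOffensiveAlliance, alliance_ineq_iff]
  exact and_iff_right_of_imp nonempty_of_isVertexCover

theorem isGreatest_indepNumber [Finite V] (G : SimpleGraph V) :
    IsGreatest {k | ∃ S : Set V, G.IsIndepVertexSet S ∧ S.ncard = k} G.indepNumber := by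
  have hne : {k | ∃ S : Set V, G.IsIndepVertexSet S ∧ S.ncard = k}.Nonempty :=
    ⟨0, ∅, Set.pairwise_empty _, Set.ncard_empty V⟩
  have hbdd : BddAbove {k | ∃ S : Set V, G.IsIndepVertexSet S ∧ S.ncard = k} :=
    ⟨Nat.card V, by rintro _ ⟨S, -, rfl⟩; exact Set.ncard_le_card S⟩
  exact ⟨Nat.sSup_mem hne hbdd, fun _ hk ↦ le_csSup hbdd hk⟩

theorem isLeast_ncard_isVertexCover [Finite V] (G : SimpleGraph V) :
    IsLeast {k | ∃ S : Set V, G.IsVertexCover S ∧ S.ncard = k}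
      (Nat.card V - G.indepNumber) := by
  obtain ⟨⟨I, hI, hIcard⟩, hmax⟩ := isGreatest_indepNumber G
  constructor
  · exact ⟨Iᶜ, SimpleGraph.isVertexCover_compl.mpr hI, by rw [Set.ncard_compl, hIcard]⟩
  · rintro _ ⟨S, hS, rfl⟩
    have hle : Sᶜ.ncard ≤ G.indepNumber :=
      hmax ⟨Sᶜ, SimpleGraph.isIndepSet_compl_iff_isVertexCover.mpr hS, rfl⟩
    have hcard := Set.ncard_add_ncard_compl S
    lia

theorem globalStrongOffensiveAllianceNum_eq_card_sub_indepNumber [Finite V] [Nonempty V]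
    (hdeg : ∀ v, (G.neighborSet v).ncard = 2 ∨ (G.neighborSet v).ncard = 3) :
    G.globalStrongOffensiveAllianceNum = Nat.card V - G.indepNumber := by
  simp only [SimpleGraph.globalStrongOffensiveAllianceNum,
    isGlobalStrongOffensiveAlliance_iff_isVertexCover hdeg]
  exact (isLeast_ncard_isVertexCover G).csInf_eq

end

theorem stmt_3_general {V : Type*} [Nonempty V] (G : SimpleGraph V) {d : ℕ}
    (hd : d = 2 ∨ d = 3) (hreg : ∀ v, (G.neighborSet v).ncard = d) :
    (∀ S : Set V, G.IsGlobalStrongOffensiveAlliance S ↔ G.IsKDominating d S) ∧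
      (Finite V → G.globalStrongOffensiveAllianceNum = Nat.card V - G.indepNumber) := by
  have hdeg (v : V) : (G.neighborSet v).ncard = 2 ∨ (G.neighborSet v).ncard = 3 := by
    rwa [hreg]
  have hfin (v : V) : (G.neighborSet v).Finite :=
    Set.finite_of_ncard_ne_zero (by have := hdeg v; lia)
  refine ⟨fun S ↦ ?_, fun _ ↦ globalStrongOffensiveAllianceNum_eq_card_sub_indepNumber hdeg⟩
  rw [isGlobalStrongOffensiveAlliance_iff_isVertexCover hdeg,
    isKDominating_iff_isVertexCover hfin hreg]

theorem stmt_3 {V : Type*} [Fintype V] (G : SimpleGraph V)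
    (hconn : G.Connected) (hcubic : ∀ v : V, (G.neighborSet v).ncard = 3) :
    (∀ S : Set V, G.IsGlobalStrongOffensiveAlliance S ↔ G.IsKDominating 3 S) ∧
      G.globalStrongOffensiveAllianceNum = Fintype.card V - G.indepNumber := by
  have := hconn.nonempty
  rw [← Nat.card_eq_fintype_card]
  exact (stmt_3_general G (.inr rfl) hcubic).imp_right (· inferInstance)
end

section
/- Let Γ₁ be a connected graph whose line graph Γ = L(Γ₁) is a connected cubic graph of order n ≥ 6. Then γ_ô(Γ) = 2γ_ô(Γ₁) = 2n/3, where γ_ô denotes the global strong offensive alliance number. -/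
/-!
In a graph with all degrees 2 or 3, a vertex outside `S` has at least two more neighbors inside
`S` than outside exactly when all its neighbors lie in `S`; so the global strong offensive
alliances are the vertex covers, both in `Γ₁` and in `L(Γ₁)`.

That `L(Γ₁)` is cubic means that the degrees of adjacent vertices of `Γ₁` sum to 5. With more than
5 edges the connected graph `Γ₁` is not the star `K₁,₄`, so these degrees are 3 and 2 and `Γ₁` is
bipartite, with the vertices of degree 3 on one side `A` and `3|A| = n` edges. By Hall's theorem
a matching saturates `A`, so `A` is a minimum vertex cover of `Γ₁`. Independent sets of `L(Γ₁)`
are matchings of `Γ₁`, so the complement of a maximum one shows that a minimum vertex cover of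
`L(Γ₁)` has `n - |A| = 2|A|` elements.
-/

namespace GlobalStrongOffensiveAlliance

open SimpleGraph

variable {V : Type*} {G : SimpleGraph V}

theorem isGlobalStrongOffensiveAlliance_iff_isVertexCover [Nonempty V]
    (hdeg : ∀ v, (G.neighborSet v).ncard ∈ Set.Icc 2 3) {S : Set V} :
    G.IsGlobalStrongOffensiveAlliance S ↔ G.IsVertexCover S := by
  have hfin (v : V) : (G.neighborSet v).Finite :=
    Set.finite_of_ncard_pos (Nat.zero_lt_of_lt (hdeg v).1)
  have hlocal (v : V) : (G.neighborSet v \ S).ncard + 2 ≤ (G.neighborSet v ∩ S).ncard ↔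
      G.neighborSet v ⊆ S := by
    have hsplit := Set.ncard_inter_add_ncard_sdiff_eq_ncard (G.neighborSet v) S (hfin v)
    obtain ⟨htwo, hthree⟩ := hdeg v
    rw [← Set.sdiff_eq_empty, ← Set.ncard_eq_zero (hfin v).sdiff]
    omega
  have hne (hS : G.IsVertexCover S) : S.Nonempty := by
    obtain ⟨v⟩ := ‹Nonempty V›
    obtain ⟨w, hvw⟩ := Set.nonempty_of_ncard_ne_zero (Nat.ne_zero_of_lt (hdeg v).1)
    exact (hS hvw).elim (⟨v, ·⟩) (⟨w, ·⟩)
  simp only [IsGlobalStrongOffensiveAlliance, hlocal]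
  exact ⟨fun hS v w hvw => or_iff_not_imp_left.2 fun hv => hS.2 v hv hvw,
    fun hS => ⟨hne hS, fun v hv w hvw => (hS hvw).resolve_left hv⟩⟩

theorem globalStrongOffensiveAllianceNum_eq_vertexCoverNum [Finite V] [Nonempty V]
    (hdeg : ∀ v, (G.neighborSet v).ncard ∈ Set.Icc 2 3) :
    (G.globalStrongOffensiveAllianceNum : ℕ∞) = G.vertexCoverNum := by
  simp only [globalStrongOffensiveAllianceNum,
    isGlobalStrongOffensiveAlliance_iff_isVertexCover hdeg]
  obtain ⟨C, hC_min, hC⟩ := vertexCoverNum_exists G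
  rw [← hC_min, ← C.toFinite.cast_ncard_eq, Nat.cast_inj]
  refine IsLeast.csInf_eq ⟨⟨C, hC, rfl⟩, ?_⟩
  rintro _ ⟨S, hS, rfl⟩
  exact ENat.toNat_le_toNat (hC_min.trans_le hS.vertexCoverNum_le)
    (Set.encard_ne_top_iff.2 S.toFinite)

theorem encard_le_encard_of_isIndepSet_lineGraph {I : Set G.edgeSet} {C : Set V}
    (hI : G.lineGraph.IsIndepSet I) (hC : G.IsVertexCover C) : I.encard ≤ C.encard := by
  have hmeet (e : G.edgeSet) : ∃ v ∈ C, v ∈ (e : Sym2 V) := by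
    obtain ⟨⟨u, v⟩, huv⟩ := e
    exact (hC huv).elim (⟨u, ·, Sym2.mem_mk_left u v⟩) (⟨v, ·, Sym2.mem_mk_right u v⟩)
  choose endpoint h_cover h_mem using hmeet
  refine Set.encard_le_encard_of_injOn (fun e _ => h_cover e) fun e he f hf hef => ?_
  by_contra hne
  exact hI he hf hne (lineGraph_adj_iff_exists.2 ⟨hne, endpoint e, h_mem e, hef ▸ h_mem f⟩)

theorem encard_edgeSet_le_vertexCoverNum_lineGraph_add :
    G.edgeSet.encard ≤ G.lineGraph.vertexCoverNum + G.vertexCoverNum := by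
  obtain ⟨K, hK_min, hK⟩ := vertexCoverNum_exists G.lineGraph
  obtain ⟨C, hC_min, hC⟩ := vertexCoverNum_exists G
  rw [← hK_min, ← hC_min, ← ENat.card_coe_set_eq, ← Set.encard_univ,
    ← Set.encard_add_encard_compl K]
  gcongr
  exact encard_le_encard_of_isIndepSet_lineGraph (isIndepSet_compl_iff_isVertexCover.2 hK) hC

section Matching

variable {M : G.Subgraph}

theorem isIndepSet_lineGraph_of_isMatching (hM : M.IsMatching) :
    G.lineGraph.IsIndepSet (Subtype.val ⁻¹' M.edgeSet) := by
  intro e he f hf hne hadj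
  obtain ⟨-, v, hve, hvf⟩ := lineGraph_adj_iff_exists.1 hadj
  obtain ⟨u, hu⟩ := Sym2.mem_iff_exists.1 hve
  obtain ⟨w, hw⟩ := Sym2.mem_iff_exists.1 hvf
  rw [Set.mem_preimage, hu, Subgraph.mem_edgeSet] at he
  rw [Set.mem_preimage, hw, Subgraph.mem_edgeSet] at hf
  exact hne (Subtype.ext (by rw [hu, hw, hM.eq_of_adj_left he hf]))

theorem encard_preimage_val_edgeSet :
    (Subtype.val ⁻¹' M.edgeSet : Set G.edgeSet).encard = M.edgeSet.encard :=
  Set.encard_preimage_of_injective_subset_range Subtype.val_injective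
    (by simpa only [Subtype.range_coe] using M.edgeSet_subset)

theorem encard_edgeSet_le_vertexCoverNum_of_isMatching (hM : M.IsMatching) :
    M.edgeSet.encard ≤ G.vertexCoverNum := by
  obtain ⟨C, hC_min, hC⟩ := vertexCoverNum_exists G
  rw [← hC_min, ← encard_preimage_val_edgeSet]
  exact encard_le_encard_of_isIndepSet_lineGraph (isIndepSet_lineGraph_of_isMatching hM) hC

theorem vertexCoverNum_lineGraph_add_vertexCoverNum (hM : M.IsMatching)
    (hle : G.vertexCoverNum ≤ M.edgeSet.encard) :
    G.lineGraph.vertexCoverNum + G.vertexCoverNum = G.edgeSet.encard := by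
  refine le_antisymm ?_ encard_edgeSet_le_vertexCoverNum_lineGraph_add
  set I : Set G.edgeSet := Subtype.val ⁻¹' M.edgeSet
  have hcover : G.lineGraph.IsVertexCover Iᶜ :=
    isVertexCover_compl.2 (isIndepSet_lineGraph_of_isMatching hM)
  calc G.lineGraph.vertexCoverNum + G.vertexCoverNum
      ≤ Iᶜ.encard + I.encard :=
        add_le_add hcover.vertexCoverNum_le (hle.trans_eq encard_preimage_val_edgeSet.symm)
    _ = G.edgeSet.encard := by
        rw [add_comm, Set.encard_add_encard_compl, Set.encard_univ, ENat.card_coe_set_eq]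

theorem encard_le_encard_edgeSet_of_subset_verts {A : Set V} (hM : M.IsMatching)
    (hA : G.IsIndepSet A) (hAM : A ⊆ M.verts) : A.encard ≤ M.edgeSet.encard := by
  let edge (a : A) : M.edgeSet := hM.toEdge ⟨a, hAM a.2⟩
  have hmem (a : A) : (a : V) ∈ (edge a : Sym2 V) := hM.mem_coe_toEdge (hAM a.2)
  refine Function.Embedding.encard_le ⟨edge, fun a b hab => ?_⟩
  by_contra hne
  have hne_val : (a : V) ≠ b := Subtype.coe_ne_coe.2 hne
  have hedge : (edge a : Sym2 V) = s(↑a, ↑b) :=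
    (Sym2.mem_and_mem_iff hne_val).1 ⟨hmem a, hab ▸ hmem b⟩
  have hadj : M.Adj a b := Subgraph.mem_edgeSet.1 (hedge ▸ (edge a).2)
  exact hA a.2 b.2 hne_val hadj.adj_sub

end Matching

section Bipartite

variable {A B : Set V}

theorem isVertexCover_of_isBipartiteWith (hAB : G.IsBipartiteWith A B) : G.IsVertexCover A :=
  fun _ _ huv => (hAB.mem_of_adj huv).imp And.left And.right

theorem isIndepSet_of_isBipartiteWith (hAB : G.IsBipartiteWith A B) : G.IsIndepSet A :=
  fun _ hu _ hv _ huv => Set.disjoint_left.1 hAB.disjoint hv (hAB.mem_of_mem_adj hu huv)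

theorem exists_isMatching_of_le_degree_of_degree_le [G.LocallyFinite] {d : ℕ}
    (hAB : G.IsBipartiteWith A B) (hd : 0 < d) (hA : ∀ a ∈ A, d ≤ G.degree a)
    (hB : ∀ b ∈ B, G.degree b ≤ d) : ∃ M : G.Subgraph, A ⊆ M.verts ∧ M.IsMatching := by
  classical
  refine exists_isMatching_of_forall_ncard_le hAB fun s hs => ?_
  obtain hs_inf | hs_fin := s.infinite_or_finite
  · simp only [hs_inf.ncard, zero_le]
  lift s to Finset V using hs_fin
  have hunion : (⋃ x ∈ (s : Set V), G.neighborSet x) = s.biUnion fun x => G.neighborFinset x := by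
    simp
  rw [hunion, Set.ncard_coe_finset, Set.ncard_coe_finset]
  refine Nat.le_of_mul_le_mul_right ?_ hd
  refine Finset.card_mul_le_card_mul G.Adj (fun a ha => ?_) (fun b hb => ?_)
  · refine (hA a (hs ha)).trans (Finset.card_le_card fun b hb => ?_)
    exact (Finset.mem_bipartiteAbove _).2
      ⟨Finset.mem_biUnion.2 ⟨a, ha, hb⟩, (G.mem_neighborFinset a b).1 hb⟩
  · obtain ⟨a, ha, hab⟩ := Finset.mem_biUnion.1 hb
    refine le_trans (Finset.card_le_card fun x hx => ?_)
      (hB b (hAB.mem_of_mem_adj (hs ha) ((G.mem_neighborFinset a b).1 hab)))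
    exact (G.mem_neighborFinset b x).2 ((Finset.mem_bipartiteBelow _).1 hx).2.symm

theorem exists_isMatching_encard_le_encard_edgeSet [G.LocallyFinite] {d : ℕ}
    (hAB : G.IsBipartiteWith A B) (hd : 0 < d) (hA : ∀ a ∈ A, d ≤ G.degree a)
    (hB : ∀ b ∈ B, G.degree b ≤ d) :
    ∃ M : G.Subgraph, M.IsMatching ∧ A.encard ≤ M.edgeSet.encard := by
  obtain ⟨M, hAM, hM⟩ := exists_isMatching_of_le_degree_of_degree_le hAB hd hA hB
  exact ⟨M, hM,
    encard_le_encard_edgeSet_of_subset_verts hM (isIndepSet_of_isBipartiteWith hAB) hAM⟩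

theorem vertexCoverNum_eq_encard [G.LocallyFinite] {d : ℕ} (hAB : G.IsBipartiteWith A B)
    (hd : 0 < d) (hA : ∀ a ∈ A, d ≤ G.degree a) (hB : ∀ b ∈ B, G.degree b ≤ d) :
    G.vertexCoverNum = A.encard := by
  obtain ⟨M, hM, hAM⟩ := exists_isMatching_encard_le_encard_edgeSet hAB hd hA hB
  exact (isVertexCover_of_isBipartiteWith hAB).vertexCoverNum_le.antisymm
    (hAM.trans (encard_edgeSet_le_vertexCoverNum_of_isMatching hM))

theorem vertexCoverNum_lineGraph_add_encard [G.LocallyFinite] {d : ℕ}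
    (hAB : G.IsBipartiteWith A B) (hd : 0 < d) (hA : ∀ a ∈ A, d ≤ G.degree a)
    (hB : ∀ b ∈ B, G.degree b ≤ d) :
    G.lineGraph.vertexCoverNum + A.encard = G.edgeSet.encard := by
  obtain ⟨M, hM, hAM⟩ := exists_isMatching_encard_le_encard_edgeSet hAB hd hA hB
  have hcover := vertexCoverNum_eq_encard hAB hd hA hB
  rw [← hcover, vertexCoverNum_lineGraph_add_vertexCoverNum hM (hcover.trans_le hAM)]

theorem encard_edgeSet_eq_mul_encard [Fintype V] [DecidableRel G.Adj] {d : ℕ}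
    (hAB : G.IsBipartiteWith A B) (hA : ∀ a ∈ A, G.degree a = d) :
    G.edgeSet.encard = d * A.encard := by
  lift A to Finset V using A.toFinite
  lift B to Finset V using B.toFinite
  rw [← coe_edgeFinset, Set.encard_coe_eq_coe_finsetCard, Set.encard_coe_eq_coe_finsetCard,
    ← isBipartiteWith_sum_degrees_eq_card_edges hAB, Finset.sum_const_nat fun a ha => hA a ha,
    mul_comm, Nat.cast_mul]

theorem isBipartiteWith_setOf_degree_eq [G.LocallyFinite] {a b : ℕ} (hab : a ≠ b)
    (hdeg : ∀ v, G.degree v = a ∨ G.degree v = b)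
    (hsum : ∀ u v, G.Adj u v → G.degree u + G.degree v = a + b) :
    G.IsBipartiteWith {v | G.degree v = a} {v | G.degree v = b} where
  disjoint := Set.disjoint_left.2 fun _ ha hb => hab (ha.symm.trans hb)
  mem_of_adj u v huv := by
    have huv_sum := hsum u v huv
    have hu := hdeg u
    simp only [Set.mem_ofPred_eq]
    omega

end Bipartite

theorem image_val_neighborSet_lineGraph {u v : V} (huv : G.Adj u v) :
    Subtype.val '' G.lineGraph.neighborSet ⟨s(u, v), huv⟩ =
      (G.incidenceSet u ∪ G.incidenceSet v) \ {s(u, v)} := by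
  ext e
  simp only [Set.mem_image, mem_neighborSet, lineGraph_adj_iff_exists, Sym2.mem_iff,
    or_and_right, exists_or, exists_eq_left, ne_eq, Subtype.exists,
    incidenceSet, Set.mem_sdiff, Set.mem_union, Set.mem_sep_iff, Set.mem_singleton_iff]
  grind

theorem ncard_neighborSet (v : V) [Fintype (G.neighborSet v)] :
    (G.neighborSet v).ncard = G.degree v := by
  rw [Set.ncard_eq_toFinset_card', Set.toFinset_card, card_neighborSet_eq_degree]

theorem ncard_incidenceSet (v : V) [Fintype (G.neighborSet v)] :
    (G.incidenceSet v).ncard = G.degree v := by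
  classical
  rw [Set.ncard_eq_toFinset_card', Set.toFinset_card, card_incidenceSet_eq_degree]

theorem ncard_neighborSet_lineGraph_add_two {u v : V} [Fintype (G.neighborSet u)]
    [Fintype (G.neighborSet v)] (huv : G.Adj u v) :
    (G.lineGraph.neighborSet ⟨s(u, v), huv⟩).ncard + 2 = G.degree u + G.degree v := by
  classical
  have hmem : s(u, v) ∈ G.incidenceSet u ∪ G.incidenceSet v :=
    Or.inl ((G.mem_incidenceSet u v).2 huv)
  have hunion := Set.ncard_union_add_ncard_inter (G.incidenceSet u) (G.incidenceSet v)
  rw [G.incidenceSet_inter_incidenceSet_of_adj huv, Set.ncard_singleton, ncard_incidenceSet,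
    ncard_incidenceSet] at hunion
  have hdiff := Set.ncard_sdiff_singleton_add_one hmem
  rw [← Set.ncard_image_of_injective _ Subtype.val_injective, image_val_neighborSet_lineGraph]
  omega

theorem edgeSet_eq_incidenceSet_of_forall_adj (hG : G.Preconnected) {c : V}
    (hleaf : ∀ v, G.Adj c v → ∀ w, G.Adj v w → w = c) : G.edgeSet = G.incidenceSet c := by
  have hstar (v : V) : v = c ∨ G.Adj c v := by
    have hreach := (reachable_iff_reflTransGen c v).1 (hG c v)
    induction hreach with
    | refl => exact Or.inl rfl
    | tail _ hvw ih =>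
      rcases ih with rfl | hcv
      · exact Or.inr hvw
      · exact Or.inl (hleaf _ hcv _ hvw)
  refine Set.Subset.antisymm (fun e he => ⟨he, ?_⟩) (G.incidenceSet_subset c)
  induction e with
  | _ u v =>
    rcases hstar u with rfl | hcu
    · exact Sym2.mem_mk_left u v
    · rw [hleaf u hcu v he]
      exact Sym2.mem_mk_right u c

theorem two_le_degree_of_lt_ncard_edgeSet [G.LocallyFinite] {k : ℕ} (hG : G.Preconnected)
    (hsum : ∀ u v, G.Adj u v → G.degree u + G.degree v = k) (hk : k < G.edgeSet.ncard) (v : V) :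
    2 ≤ G.degree v := by
  have hnontrivial : Nontrivial V := by
    obtain ⟨⟨a, b⟩, hab⟩ := Set.nonempty_of_ncard_ne_zero (Nat.ne_zero_of_lt hk)
    exact Adj.nontrivial hab
  obtain ⟨c, hvc⟩ := (G.degree_pos_iff_exists_adj v).1 (hG.degree_pos_of_nontrivial v)
  by_contra! hv
  -- A leaf `v` forces its neighbor `c` to have degree `k - 1`, so that `G` is a star around `c`.
  have hleaf (u : V) (hcu : G.Adj c u) (w : V) (huw : G.Adj u w) : w = c := by
    have hu : G.degree u = 1 := by
      have := hvc.degree_pos_left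
      have := hsum v c hvc
      have := hsum c u hcu
      omega
    exact (degree_eq_one_iff_existsUnique_adj.1 hu).unique huw hcu.symm
  rw [edgeSet_eq_incidenceSet_of_forall_adj hG hleaf, ncard_incidenceSet] at hk
  have := hsum v c hvc
  omega

theorem degree_eq_three_or_two [G.LocallyFinite] (hG : G.Preconnected)
    (hsum : ∀ u v, G.Adj u v → G.degree u + G.degree v = 5) (hcard : 5 < G.edgeSet.ncard) (v : V) :
    G.degree v = 3 ∨ G.degree v = 2 := by
  have htwo := two_le_degree_of_lt_ncard_edgeSet hG hsum hcard
  obtain ⟨w, hvw⟩ := (G.degree_pos_iff_exists_adj v).1 (zero_lt_two.trans_le (htwo v))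
  have := hsum v w hvw
  have := htwo v
  have := htwo w
  omega

end GlobalStrongOffensiveAlliance

open GlobalStrongOffensiveAlliance

theorem stmt_5 {V : Type*} [Fintype V] [DecidableEq V] (G₁ : SimpleGraph V)
    [DecidableRel G₁.Adj]
    (hconn₁ : G₁.Connected) (hconn : G₁.lineGraph.Connected)
    (hcubic : ∀ e : G₁.edgeSet, (G₁.lineGraph.neighborSet e).ncard = 3)
    (hn : 6 ≤ Fintype.card G₁.edgeSet) :
    G₁.lineGraph.globalStrongOffensiveAllianceNum = 2 * G₁.globalStrongOffensiveAllianceNum ∧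
      (G₁.lineGraph.globalStrongOffensiveAllianceNum : ℝ) = 2 * Fintype.card G₁.edgeSet / 3 := by
  have hsum (u v : V) (huv : G₁.Adj u v) : G₁.degree u + G₁.degree v = 5 := by
    rw [← ncard_neighborSet_lineGraph_add_two huv, hcubic]
  have hdeg := degree_eq_three_or_two hconn₁.preconnected hsum
    (by rwa [Set.ncard_eq_toFinset_card', Set.toFinset_card])
  have hAB := isBipartiteWith_setOf_degree_eq (by norm_num) hdeg hsum
  have hA (a : V) (ha : G₁.degree a = 3) : 3 ≤ G₁.degree a := ha.ge
  have hB (b : V) (hb : G₁.degree b = 2) : G₁.degree b ≤ 3 := hb.trans_le (by norm_num)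
  have hedges := encard_edgeSet_eq_mul_encard hAB fun _ ha => ha
  have hlineGraph := vertexCoverNum_lineGraph_add_encard hAB zero_lt_three hA hB
  have := hconn₁.nonempty
  have := hconn.nonempty
  have hγ := globalStrongOffensiveAllianceNum_eq_vertexCoverNum (G := G₁) fun v => by
    rcases hdeg v with h | h <;> simp [ncard_neighborSet, h]
  have hγL := globalStrongOffensiveAllianceNum_eq_vertexCoverNum (G := G₁.lineGraph) fun e => by
    simp [hcubic e]
  rw [vertexCoverNum_eq_encard hAB zero_lt_three hA hB] at hγ
  rw [← hγ, ← Set.coe_fintypeCard] at hedges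
  rw [← hγ, ← hγL, ← Set.coe_fintypeCard] at hlineGraph
  norm_cast at hedges hlineGraph
  refine ⟨by omega, ?_⟩
  rw [eq_div_iff three_ne_zero]
  norm_cast
  omega
end

section
/- Let Γ be a connected δ-regular finite simple graph of order n with δ ≥ 1. Then (n/4)·⌈(2δ−1)/2⌉ ≤ γ_o(L(Γ)) ≤ n(δ+1)/4, where L(Γ) is the line graph of Γ and γ_o denotes the global offensive alliance number. -/
/-- A nonempty set `S` of vertices is a *global offensive alliance* if every vertex
outside `S` has strictly more neighbors inside `S` than outside `S`. -/
def SimpleGraph.IsGlobalOffensiveAlliance {V : Type*} (G : SimpleGraph V) (S : Set V) : Prop :=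
  S.Nonempty ∧ ∀ v ∉ S, (G.neighborSet v \ S).ncard + 1 ≤ (G.neighborSet v ∩ S).ncard

/-- The *global offensive alliance number*: the minimum cardinality of a global offensive
alliance. -/
noncomputable def SimpleGraph.globalOffensiveAllianceNum {V : Type*} (G : SimpleGraph V) : ℕ :=
  sInf {k | ∃ S : Set V, G.IsGlobalOffensiveAlliance S ∧ S.ncard = k}

/-!
Write `L` for the line graph of a `δ`-regular graph on `n` vertices; `L` is `(2δ - 2)`-regular.
Everything rests on one cut inequality: a set `S` of edges with complement `T` satisfies
`n · cut(S, T) ≤ 4 |S| |T|` in `L`. Indeed `cut(S, T) = ∑ v, d_S(v) d_T(v)`, where `d_S` and `d_T`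
count the incident edges in `S` and `T`; since `d_S + d_T = δ`, these functions vary oppositely and
Chebyshev's sum inequality applies.

If `S` is a global offensive alliance, every edge of `T` has at least `δ` neighbors in `S`, so
`δ |T| ≤ cut(S, T)` and hence `n δ ≤ 4 |S|`. For the upper bound, take `S` maximizing
`2 cut(S, T) + |S|`: no single move across the cut helps, so `S` is an alliance and every
edge of `S` has at least as many neighbors in `T` as in `S`. Thus `(δ - 1) |S| ≤ cut(S, T)`, which
gives `n (δ - 1) ≤ 4 |T|`.
-/

namespace OffensiveAlliance

open Finset

section Cut

variable {W : Type*} {G : SimpleGraph W} [DecidableRel G.Adj]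

theorem card_interedges_comm (S T : Finset W) : #(G.interedges S T) = #(G.interedges T S) :=
  haveI := G.symm
  Rel.card_interedges_comm S T

variable [Fintype W] [DecidableEq W]

theorem isGlobalOffensiveAlliance_coe {S : Finset W} :
    G.IsGlobalOffensiveAlliance S ↔
      S.Nonempty ∧ ∀ v ∉ S, #(G.neighborFinset v \ S) < #(G.neighborFinset v ∩ S) := by
  simp only [SimpleGraph.IsGlobalOffensiveAlliance, ← G.coe_neighborFinset, ← coe_sdiff,
    ← coe_inter, Set.ncard_coe_finset, coe_nonempty, mem_coe, Nat.succ_le_iff]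

theorem card_interedges_eq_sum (S T : Finset W) :
    #(G.interedges S T) = ∑ v ∈ S, #(G.neighborFinset v ∩ T) := by
  rw [SimpleGraph.interedges_def, card_filter, sum_product]
  refine sum_congr rfl fun v _ => ?_
  rw [← card_filter]
  congr 1
  ext w
  simp [and_comm]

theorem card_interedges_compl_eq_sum_sdiff (S : Finset W) :
    #(G.interedges S Sᶜ) = ∑ v ∈ S, #(G.neighborFinset v \ S) := by
  simp only [card_interedges_eq_sum, sdiff_eq_inter_compl]

theorem card_interedges_compl_eq_sum_inter (S : Finset W) :
    #(G.interedges S Sᶜ) = ∑ v ∈ Sᶜ, #(G.neighborFinset v ∩ S) := by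
  rw [card_interedges_comm, card_interedges_eq_sum]

theorem neighborFinset_sdiff_insert_self (v : W) (S : Finset W) :
    G.neighborFinset v \ insert v S = G.neighborFinset v \ S := by
  rw [sdiff_insert, erase_eq_of_notMem (by simp)]

theorem card_interedges_insert_compl {S : Finset W} {v : W} (hv : v ∉ S) :
    #(G.interedges (insert v S) (insert v S)ᶜ) + #(G.neighborFinset v ∩ S) =
      #(G.interedges S Sᶜ) + #(G.neighborFinset v \ S) := by
  have hafter : #(G.interedges (insert v S) (insert v S)ᶜ) =
      #(G.neighborFinset v \ S) + #(G.interedges S (insert v S)ᶜ) := by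
    rw [card_interedges_eq_sum, sum_insert hv, ← card_interedges_eq_sum, ← sdiff_eq_inter_compl,
      neighborFinset_sdiff_insert_self]
  have hbefore : #(G.interedges S Sᶜ) =
      #(G.neighborFinset v ∩ S) + #(G.interedges S (insert v S)ᶜ) := by
    have hcompl : Sᶜ = insert v (insert v S)ᶜ := by
      rw [compl_insert, insert_erase (mem_compl.2 hv)]
    rw [card_interedges_compl_eq_sum_inter, hcompl, sum_insert (by simp),
      ← card_interedges_eq_sum, card_interedges_comm]
  lia

theorem exists_alliance_card_inter_le_card_sdiff [Nonempty W] (G : SimpleGraph W)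
    [DecidableRel G.Adj] :
    ∃ S : Finset W, G.IsGlobalOffensiveAlliance S ∧
      ∀ v ∈ S, #(G.neighborFinset v ∩ S) ≤ #(G.neighborFinset v \ S) := by
  obtain ⟨S, hmax⟩ :=
    Finite.exists_max fun S : Finset W => 2 * #(G.interedges S Sᶜ) + #S
  have hout : ∀ v ∉ S, #(G.neighborFinset v \ S) < #(G.neighborFinset v ∩ S) := fun v hv => by
    have hinsert := hmax (insert v S)
    have hcut := card_interedges_insert_compl (G := G) hv
    rw [card_insert_of_notMem hv] at hinsert
    lia
  refine ⟨S, isGlobalOffensiveAlliance_coe.2 ⟨?_, hout⟩, fun v hv => ?_⟩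
  · rw [nonempty_iff_ne_empty]
    rintro rfl
    simpa using hout (Classical.arbitrary W) (notMem_empty _)
  · have herase := hmax (S.erase v)
    have hcut := card_interedges_insert_compl (G := G) (notMem_erase v S)
    have hsdiff : G.neighborFinset v \ S.erase v = G.neighborFinset v \ S := by
      rw [← neighborFinset_sdiff_insert_self, insert_erase hv]
    rw [insert_erase hv, inter_erase, erase_eq_of_notMem (by simp), hsdiff] at hcut
    have hcard := card_erase_add_one hv
    lia

theorem mul_card_compl_le_card_interedges {S : Finset W} (hS : G.IsGlobalOffensiveAlliance S)
    {d : ℕ} (hd : ∀ v, d ≤ G.degree v) : (d / 2 + 1) * #Sᶜ ≤ #(G.interedges S Sᶜ) := by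
  rw [card_interedges_compl_eq_sum_inter, mul_comm, ← smul_eq_mul]
  refine card_nsmul_le_sum _ _ _ fun v hv => ?_
  have hlt := (isGlobalOffensiveAlliance_coe.1 hS).2 v (mem_compl.1 hv)
  have hdeg := card_sdiff_add_card_inter (G.neighborFinset v) S
  have hdv := hd v
  rw [G.card_neighborFinset_eq_degree] at hdeg
  lia

theorem mul_card_le_card_interedges {S : Finset W}
    (hS : ∀ v ∈ S, #(G.neighborFinset v ∩ S) ≤ #(G.neighborFinset v \ S))
    {d : ℕ} (hd : ∀ v, d ≤ G.degree v) : (d + 1) / 2 * #S ≤ #(G.interedges S Sᶜ) := by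
  rw [card_interedges_compl_eq_sum_sdiff, mul_comm, ← smul_eq_mul]
  refine card_nsmul_le_sum _ _ _ fun v hv => ?_
  have hle := hS v hv
  have hdeg := card_sdiff_add_card_inter (G.neighborFinset v) S
  have hdv := hd v
  rw [G.card_neighborFinset_eq_degree] at hdeg
  lia

end Cut

section AllianceNum

variable {W : Type*} {G : SimpleGraph W}

theorem globalOffensiveAllianceNum_le_card {S : Finset W} (hS : G.IsGlobalOffensiveAlliance S) :
    G.globalOffensiveAllianceNum ≤ #S :=
  Nat.sInf_le ⟨S, hS, Set.ncard_coe_finset S⟩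

theorem exists_alliance_card_eq_globalOffensiveAllianceNum [Finite W] [Nonempty W]
    (G : SimpleGraph W) :
    ∃ S : Finset W, G.IsGlobalOffensiveAlliance S ∧ #S = G.globalOffensiveAllianceNum := by
  have huniv : G.IsGlobalOffensiveAlliance Set.univ :=
    ⟨Set.univ_nonempty, fun v hv => absurd (Set.mem_univ v) hv⟩
  obtain ⟨S, hS, hcard⟩ := Nat.sInf_mem (s := {k | ∃ S : Set W,
    G.IsGlobalOffensiveAlliance S ∧ S.ncard = k}) ⟨_, _, huniv, rfl⟩
  lift S to Finset W using S.toFinite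
  exact ⟨S, hS, (Set.ncard_coe_finset S).symm.trans hcard⟩

end AllianceNum

section LineGraph

variable {V : Type*} [DecidableEq V] {G : SimpleGraph V}

/-- The number of edges of `S` incident to `v`, that is, the degree of `v` in the spanning subgraph
of `G` with edge set `S`. Sets of edges are finsets in `G.edgeSet`, the vertex type of the line
graph. -/
def edgeDegree (S : Finset G.edgeSet) (v : V) : ℕ :=
  #{e ∈ S | v ∈ e.val}

variable [Fintype V]

theorem sum_edgeDegree (S : Finset G.edgeSet) : ∑ v, edgeDegree S v = 2 * #S := by
  have hends (e : G.edgeSet) : #{v | v ∈ e.val} = 2 := by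
    rw [← Sym2.card_toFinset_of_not_isDiag _ (G.not_isDiag_of_mem_edgeSet e.2)]
    congr 1
    ext v
    simp
  calc ∑ v, edgeDegree S v = ∑ e ∈ S, #{v | v ∈ e.val} :=
        sum_card_bipartiteAbove_eq_sum_card_bipartiteBelow (s := univ) (t := S)
          fun v (e : G.edgeSet) => v ∈ e.val
    _ = 2 * #S := by simp only [hends, sum_const, smul_eq_mul, mul_comm]

theorem card_interedges_lineGraph [DecidableRel G.lineGraph.Adj] {S T : Finset G.edgeSet}
    (hST : Disjoint S T) :
    #(G.lineGraph.interedges S T) = ∑ v, edgeDegree S v * edgeDegree T v := by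
  have hunion : G.lineGraph.interedges S T = univ.biUnion fun v =>
      {e ∈ S | v ∈ e.val} ×ˢ {f ∈ T | v ∈ f.val} := by
    ext ⟨e, f⟩
    have hne (he : e ∈ S) (hf : f ∈ T) : e ≠ f := hST.forall_ne_finset he hf
    simp only [SimpleGraph.mk_mem_interedges_iff, SimpleGraph.lineGraph_adj_iff_exists, mem_biUnion,
      mem_univ, true_and, mem_product, mem_filter]
    grind
  rw [hunion, card_biUnion]
  · simp only [card_product, edgeDegree]
  · intro v _ w _ hvw
    refine disjoint_left.2 ?_
    rintro ⟨e, f⟩ hv hw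
    simp only [mem_product, mem_filter] at hv hw
    obtain ⟨⟨he, hve⟩, hf, hvf⟩ := hv
    obtain ⟨⟨-, hwe⟩, -, hwf⟩ := hw
    exact hST.forall_ne_finset he hf (Subtype.ext (Sym2.eq_of_ne_mem hvw hve hwe hvf hwf))

variable [DecidableRel G.Adj]

theorem edgeDegree_add_edgeDegree_compl (S : Finset G.edgeSet) (v : V) :
    edgeDegree S v + edgeDegree Sᶜ v = G.degree v := by
  have hincident : #{e : G.edgeSet | v ∈ e.val} = G.degree v := by
    rw [← G.card_incidenceFinset_eq_degree, ← card_map (.subtype _)]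
    congr 1
    ext e
    simp [SimpleGraph.incidenceSet, and_comm]
  rw [← hincident, edgeDegree, edgeDegree, ← card_union_of_disjoint, ← filter_union, union_compl]
  exact disjoint_filter_filter disjoint_compl_right

variable {δ : ℕ}

theorem card_mul_eq_two_mul_card_add_card_compl (hreg : G.IsRegularOfDegree δ)
    (S : Finset G.edgeSet) :
    Fintype.card V * δ = 2 * (#S + #Sᶜ) := by
  rw [mul_add, ← sum_edgeDegree, ← sum_edgeDegree, ← sum_add_distrib]
  simp [edgeDegree_add_edgeDegree_compl, hreg.degree_eq]

omit [DecidableEq V] in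
theorem isRegularOfDegree_lineGraph [DecidableRel G.lineGraph.Adj]
    (hreg : G.IsRegularOfDegree δ) :
    G.lineGraph.IsRegularOfDegree (2 * (δ - 1)) := by
  classical
  intro e
  have hterm (v : V) : edgeDegree {e} v * edgeDegree {e}ᶜ v = edgeDegree {e} v * (δ - 1) := by
    have hdeg := edgeDegree_add_edgeDegree_compl {e} v
    have hle : edgeDegree {e} v ≤ 1 := (card_filter_le _ _).trans_eq (card_singleton e)
    rw [hreg.degree_eq] at hdeg
    interval_cases edgeDegree {e} v <;> lia
  calc G.lineGraph.degree e = #(G.lineGraph.interedges {e} {e}ᶜ) := by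
        rw [card_interedges_compl_eq_sum_sdiff, sum_singleton, sdiff_singleton_eq_erase,
          erase_eq_of_notMem (by simp), G.lineGraph.card_neighborFinset_eq_degree]
    _ = ∑ v, edgeDegree {e} v * (δ - 1) := by
        rw [card_interedges_lineGraph disjoint_compl_right]
        exact sum_congr rfl fun v _ => hterm v
    _ = 2 * (δ - 1) := by rw [← sum_mul, sum_edgeDegree, card_singleton, mul_one]

theorem card_mul_card_interedges_lineGraph_le [DecidableRel G.lineGraph.Adj]
    (hreg : G.IsRegularOfDegree δ) (S : Finset G.edgeSet) :
    Fintype.card V * #(G.lineGraph.interedges S Sᶜ) ≤ 4 * #S * #Sᶜ := by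
  have hanti : Antivary (edgeDegree S) (edgeDegree Sᶜ) := fun v w hlt => by
    have hv := edgeDegree_add_edgeDegree_compl S v
    have hw := edgeDegree_add_edgeDegree_compl S w
    rw [hreg.degree_eq] at hv hw
    lia
  calc Fintype.card V * #(G.lineGraph.interedges S Sᶜ)
      = Fintype.card V * ∑ v, edgeDegree S v * edgeDegree Sᶜ v := by
        rw [card_interedges_lineGraph disjoint_compl_right]
    _ ≤ (∑ v, edgeDegree S v) * ∑ v, edgeDegree Sᶜ v := hanti.card_mul_sum_le_sum_mul_sum
    _ = 4 * #S * #Sᶜ := by rw [sum_edgeDegree, sum_edgeDegree]; ring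

omit [DecidableEq V] in
theorem card_mul_le_four_mul_card_alliance (hreg : G.IsRegularOfDegree δ)
    {S : Finset G.edgeSet} (hS : G.lineGraph.IsGlobalOffensiveAlliance S) :
    Fintype.card V * δ ≤ 4 * #S := by
  classical
  have hedges := card_mul_eq_two_mul_card_add_card_compl hreg S
  obtain hzero | hpos := (#Sᶜ).eq_zero_or_pos
  · lia
  have hcut : δ * #Sᶜ ≤ #(G.lineGraph.interedges S Sᶜ) := by
    have h := mul_card_compl_le_card_interedges hS
      fun e => (isRegularOfDegree_lineGraph hreg e).ge
    exact (Nat.mul_le_mul_right _ (by lia)).trans h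
  refine Nat.le_of_mul_le_mul_right ?_ hpos
  calc Fintype.card V * δ * #Sᶜ = Fintype.card V * (δ * #Sᶜ) := mul_assoc _ _ _
    _ ≤ Fintype.card V * #(G.lineGraph.interedges S Sᶜ) := Nat.mul_le_mul_left _ hcut
    _ ≤ 4 * #S * #Sᶜ := card_mul_card_interedges_lineGraph_le hreg S

omit [DecidableEq V] in
theorem exists_alliance_four_mul_card_le [Nonempty G.edgeSet] (hreg : G.IsRegularOfDegree δ) :
    ∃ S : Finset G.edgeSet, G.lineGraph.IsGlobalOffensiveAlliance S ∧
      4 * #S ≤ Fintype.card V * (δ + 1) := by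
  classical
  obtain ⟨S, hS, hbalanced⟩ := exists_alliance_card_inter_le_card_sdiff G.lineGraph
  refine ⟨S, hS, ?_⟩
  have hedges := card_mul_eq_two_mul_card_add_card_compl hreg S
  have hcut : (δ - 1) * #S ≤ #(G.lineGraph.interedges S Sᶜ) := by
    have h := mul_card_le_card_interedges hbalanced
      fun e => (isRegularOfDegree_lineGraph hreg e).ge
    rwa [show (2 * (δ - 1) + 1) / 2 = δ - 1 by lia] at h
  have hcompl : Fintype.card V * (δ - 1) ≤ 4 * #Sᶜ := by
    have hpos : 0 < #S := (isGlobalOffensiveAlliance_coe.1 hS).1.card_pos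
    refine Nat.le_of_mul_le_mul_right ?_ hpos
    calc Fintype.card V * (δ - 1) * #S = Fintype.card V * ((δ - 1) * #S) := mul_assoc _ _ _
      _ ≤ Fintype.card V * #(G.lineGraph.interedges S Sᶜ) := Nat.mul_le_mul_left _ hcut
      _ ≤ 4 * #S * #Sᶜ := card_mul_card_interedges_lineGraph_le hreg S
      _ = 4 * #Sᶜ * #S := mul_right_comm _ _ _
  rw [Nat.mul_sub, mul_one, Nat.sub_le_iff_le_add] at hcompl
  rw [mul_add, mul_one]
  lia

end LineGraph

end OffensiveAlliance

open OffensiveAlliance in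
theorem stmt_6_general {V : Type*} [Fintype V] [Nonempty V] (G : SimpleGraph V) (δ : ℕ)
    (hreg : ∀ v : V, (G.neighborSet v).ncard = δ) (hδ : 1 ≤ δ) :
    (Fintype.card V : ℝ) / 4 * ⌈(2 * (δ : ℝ) - 1) / 2⌉ ≤
        G.lineGraph.globalOffensiveAllianceNum ∧
      (G.lineGraph.globalOffensiveAllianceNum : ℝ) ≤ Fintype.card V * (δ + 1) / 4 := by
  classical
  have hreg' : G.IsRegularOfDegree δ := fun v => by
    rw [← hreg v, Set.ncard_eq_toFinset_card']; rfl
  have hceil : ⌈(2 * (δ : ℝ) - 1) / 2⌉ = (δ : ℤ) := by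
    rw [Int.ceil_eq_iff]; push_cast; constructor <;> linarith
  have : Nonempty G.edgeSet := by
    have hedges := card_mul_eq_two_mul_card_add_card_compl hreg' Finset.univ
    have hpos : 0 < Fintype.card V * δ := Nat.mul_pos Fintype.card_pos hδ
    rw [Finset.compl_univ, Finset.card_empty, Finset.card_univ] at hedges
    exact Fintype.card_pos_iff.1 (by lia)
  obtain ⟨S, hS, hcard⟩ := exists_alliance_card_eq_globalOffensiveAllianceNum G.lineGraph
  obtain ⟨T, hT, hTle⟩ := exists_alliance_four_mul_card_le hreg'
  have hlower : (Fintype.card V * δ : ℝ) ≤ 4 * G.lineGraph.globalOffensiveAllianceNum := by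
    exact_mod_cast hcard ▸ card_mul_le_four_mul_card_alliance hreg' hS
  have hupper : 4 * (G.lineGraph.globalOffensiveAllianceNum : ℝ) ≤ Fintype.card V * (δ + 1) := by
    exact_mod_cast (Nat.mul_le_mul_left 4 (globalOffensiveAllianceNum_le_card hT)).trans hTle
  rw [hceil, Int.cast_natCast]
  constructor <;> linarith

theorem stmt_6 {V : Type*} [Fintype V] (G : SimpleGraph V) (δ : ℕ)
    (hconn : G.Connected) (hreg : ∀ v : V, (G.neighborSet v).ncard = δ) (hδ : 1 ≤ δ) :
    (Fintype.card V : ℝ) / 4 * ⌈(2 * (δ : ℝ) - 1) / 2⌉ ≤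
        G.lineGraph.globalOffensiveAllianceNum ∧
      (G.lineGraph.globalOffensiveAllianceNum : ℝ) ≤ Fintype.card V * (δ + 1) / 4 :=
  haveI := hconn.nonempty
  stmt_6_general G δ hreg hδ
end

section
/- Let Γ be a connected cubic graph of order n. Then 3n/4 ≤ γ_ô(L(Γ)) = γ_o(L(Γ)) ≤ n, where L(Γ) is the line graph of Γ, γ_o denotes the global offensive alliance number and γ_ô denotes the global strong offensive alliance number. -/
/-!
Let `G` be `d`-regular, let `S` be a set of edges and let `H` be the graph of the remaining edges.
An edge `xy` of `H` has `deg_H x + deg_H y - 2` neighbors outside `S` in the line graph, out of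
`2d - 2` in all. By parity `S` is a global offensive alliance if and only if it is a global strong
one, and if and only if `deg_H x + deg_H y ≤ d` for every edge `xy` of `H`. So the task is to find
the largest size of such an `H`.

Summing the inequality over the edges gives `∑ deg_H ^ 2 ≤ d |E(H)|`, and by Cauchy–Schwarz
`4 |E(H)| ≤ d n`. In the other direction, `G` has a spanning star forest, and removing one edge from
each star with `d` leaves produces a suitable `H` with at least `n / 2` edges when `d ≥ 3`: a star
with `j < d` leaves keeps `j ≥ (j + 1) / 2` edges, one with `d` leaves keeps `d - 1 ≥ (d + 1) / 2`.
-/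

open Finset

lemma globalOffensiveAllianceNum_le_ncard {W : Type*} {G : SimpleGraph W} {S : Set W}
    (hS : G.IsGlobalOffensiveAlliance S) : G.globalOffensiveAllianceNum ≤ S.ncard :=
  Nat.sInf_le ⟨S, hS, rfl⟩

lemma exists_isGlobalOffensiveAlliance_ncard_eq {W : Type*} [Nonempty W] (G : SimpleGraph W) :
    ∃ S, G.IsGlobalOffensiveAlliance S ∧ S.ncard = G.globalOffensiveAllianceNum :=
  Nat.sInf_mem (s := {k | ∃ S, G.IsGlobalOffensiveAlliance S ∧ S.ncard = k})
    ⟨_, Set.univ, ⟨Set.univ_nonempty, fun v hv ↦ absurd (Set.mem_univ v) hv⟩, rfl⟩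

section DegreeSum

variable {V : Type*} [Fintype V]

lemma sum_sum_neighborFinset_comm {M : Type*} [AddCommMonoid M] (H : SimpleGraph V)
    [DecidableRel H.Adj] (f : V → V → M) :
    ∑ x, ∑ y ∈ H.neighborFinset x, f x y = ∑ x, ∑ y ∈ H.neighborFinset x, f y x :=
  sum_comm' fun x y ↦ by simp [H.adj_comm]

variable {G H : SimpleGraph V} [DecidableRel G.Adj] [DecidableRel H.Adj] {d k : ℕ}

lemma sum_degree_sq_le_mul_card_edgeFinset
    (hk : ∀ x y, H.Adj x y → H.degree x + H.degree y ≤ k) :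
    ∑ x, H.degree x ^ 2 ≤ k * #H.edgeFinset := by
  have hsum : ∑ x, ∑ _y ∈ H.neighborFinset x, H.degree x = ∑ x, H.degree x ^ 2 := by
    simp [sq]
  refine Nat.le_of_mul_le_mul_left ?_ two_pos
  calc 2 * ∑ x, H.degree x ^ 2
      = ∑ x, ∑ y ∈ H.neighborFinset x, (H.degree x + H.degree y) := by
        simp_rw [sum_add_distrib]
        rw [← sum_sum_neighborFinset_comm H fun x _ ↦ H.degree x, hsum, two_mul]
    _ ≤ ∑ x, ∑ _y ∈ H.neighborFinset x, k :=
        sum_le_sum fun x _ ↦ sum_le_sum fun y hy ↦ hk x y ((H.mem_neighborFinset x y).1 hy)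
    _ = 2 * (k * #H.edgeFinset) := by
        simp only [sum_const, H.card_neighborFinset_eq_degree, smul_eq_mul, ← sum_mul,
          H.sum_degrees_eq_twice_card_edges]
        ring

lemma four_mul_card_edgeFinset_le_mul_card
    (hk : ∀ x y, H.Adj x y → H.degree x + H.degree y ≤ k) :
    4 * #H.edgeFinset ≤ k * Fintype.card V := by
  have cauchy_schwarz : (2 * #H.edgeFinset) ^ 2 ≤ Fintype.card V * ∑ x, H.degree x ^ 2 := by
    rw [← H.sum_degrees_eq_twice_card_edges, ← card_univ]
    exact sq_sum_le_card_mul_sum_sq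
  have hsq : #H.edgeFinset * (4 * #H.edgeFinset) ≤ #H.edgeFinset * (k * Fintype.card V) := by
    calc #H.edgeFinset * (4 * #H.edgeFinset)
        = (2 * #H.edgeFinset) ^ 2 := by ring
      _ ≤ Fintype.card V * (k * #H.edgeFinset) := cauchy_schwarz.trans <|
        Nat.mul_le_mul_left _ (sum_degree_sq_le_mul_card_edgeFinset hk)
      _ = #H.edgeFinset * (k * Fintype.card V) := by ring
  obtain hzero | hpos := Nat.eq_zero_or_pos #H.edgeFinset
  · simp [hzero]
  · exact Nat.le_of_mul_le_mul_left hsq hpos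

lemma two_mul_card_edgeFinset_of_isRegularOfDegree (hreg : G.IsRegularOfDegree d) :
    2 * #G.edgeFinset = d * Fintype.card V := by
  simp [← G.sum_degrees_eq_twice_card_edges, hreg.degree_eq, mul_comm]

lemma card_add_two_mul_card_degree_eq_le (hpos : ∀ v, 0 < H.degree v) (hk : 3 ≤ k) :
    Fintype.card V + 2 * #{v | H.degree v = k} ≤ 2 * #H.edgeFinset := by
  calc Fintype.card V + 2 * #{v | H.degree v = k}
      = ∑ v, (1 + 2 * if H.degree v = k then 1 else 0) := by
        simp only [sum_add_distrib, ← mul_sum, card_filter, sum_const, card_univ, smul_eq_mul,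
          mul_one]
    _ ≤ ∑ v, H.degree v := sum_le_sum fun v _ ↦ by
        have := hpos v
        split_ifs <;> omega
    _ = 2 * #H.edgeFinset := H.sum_degrees_eq_twice_card_edges

end DegreeSum

/-- A spanning star forest: every component is a star with at least one edge. This is expressed
locally: no vertex is isolated, and every edge has an endpoint with a unique neighbor. -/
structure IsStarForest {V : Type*} (H : SimpleGraph V) : Prop where
  exists_adj : ∀ v, ∃ w, H.Adj v w
  existsUnique_adj_or : ∀ ⦃x y⦄, H.Adj x y → (∃! z, H.Adj x z) ∨ ∃! z, H.Adj y z

section StarForest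

variable {V : Type*} {G H : SimpleGraph V}

lemma existsUnique_adj_or_of_deleteEdges {x y v : V} (hv : ∃ w, H.Adj v w)
    (hdel : ¬∃ w, (H.deleteEdges {s(x, y)}).Adj v w) :
    (∃! z, H.Adj x z) ∨ ∃! z, H.Adj y z := by
  have hend : ∀ w, H.Adj v w → s(v, w) = s(x, y) := fun w hvw ↦
    by_contra fun hne ↦ hdel ⟨w, H.deleteEdges_adj.2 ⟨hvw, hne⟩⟩
  obtain ⟨w, hvw⟩ := hv
  have hunique : ∃! z, H.Adj v z :=
    ⟨w, hvw, fun z hvz ↦ Sym2.congr_right.1 ((hend z hvz).trans (hend w hvw).symm)⟩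
  have hmem : v ∈ s(x, y) := hend w hvw ▸ Sym2.mem_mk_left v w
  obtain rfl | rfl := Sym2.mem_iff.1 hmem
  exacts [.inl hunique, .inr hunique]

-- A minimal edge cover is a star forest.
lemma exists_le_isStarForest [Finite V] (hG : ∀ v, ∃ w, G.Adj v w) :
    ∃ H ≤ G, IsStarForest H := by
  obtain ⟨H, hHG, hmin⟩ :=
    exists_minimal_le_of_wellFoundedLT (fun H : SimpleGraph V ↦ ∀ v, ∃ w, H.Adj v w) G hG
  refine ⟨H, hHG, hmin.prop, fun x y hxy ↦ ?_⟩
  have hlt : H.deleteEdges {s(x, y)} < H :=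
    (H.deleteEdges_le _).lt_of_not_ge fun hle ↦ (H.deleteEdges_adj.1 (hle hxy)).2 rfl
  obtain ⟨v, hv⟩ := not_forall.1 (hmin.not_prop_of_lt hlt)
  exact existsUnique_adj_or_of_deleteEdges (hmin.prop v) hv

namespace IsStarForest

variable [Fintype V] [DecidableRel H.Adj] {k : ℕ}

-- Delete one edge at every vertex of degree `k`; as `k ≥ 3`, this leaves enough edges.
open Classical in
lemma exists_le_degree_add_degree_le (hH : IsStarForest H) (hdeg : ∀ v, H.degree v ≤ k)
    (hk : 3 ≤ k) :
    ∃ H' ≤ H, (∀ x y, H'.Adj x y → H'.degree x + H'.degree y ≤ k) ∧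
      Fintype.card V ≤ 2 * #H'.edgeFinset := by
  choose partner hpartner using hH.exists_adj
  let pruned : Finset (Sym2 V) := image (fun v ↦ s(v, partner v)) {v | H.degree v = k}
  obtain ⟨H', hH'⟩ : ∃ H', H' = H.deleteEdges (pruned : Set (Sym2 V)) := ⟨_, rfl⟩
  have hle : H' ≤ H := hH' ▸ H.deleteEdges_le _
  have hdeg_le (v : V) : H'.degree v ≤ H.degree v := SimpleGraph.degree_le_of_le hle
  have hdeg_lt (v : V) : H'.degree v < k := by
    refine ((hdeg_le v).trans (hdeg v)).lt_of_ne fun heq ↦ ?_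
    have hv : H.degree v = k := (hdeg v).antisymm (heq ▸ hdeg_le v)
    have hnbr : H'.neighborFinset v = H.neighborFinset v := by
      refine eq_of_subset_of_card_le (fun w ↦ by simpa using @hle v w) ?_
      simp [heq, hv]
    have hadj : H'.Adj v (partner v) := by
      rw [← SimpleGraph.mem_neighborFinset, hnbr]
      simpa using hpartner v
    rw [hH', SimpleGraph.deleteEdges_adj] at hadj
    exact hadj.2 (mem_image_of_mem _ (by simpa using hv))
  refine ⟨H', hle, fun x y hxy ↦ ?_, ?_⟩
  · obtain hx | hy := hH.existsUnique_adj_or (hle hxy)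
    · have := H.degree_eq_one_iff_existsUnique_adj.2 hx
      have := hdeg_le x
      have := hdeg_lt y
      omega
    · have := H.degree_eq_one_iff_existsUnique_adj.2 hy
      have := hdeg_le y
      have := hdeg_lt x
      omega
  · have hedges : H'.edgeFinset = H.edgeFinset \ pruned := by
      ext e
      simp [hH']
    have hpruned : #pruned ≤ #{v | H.degree v = k} := card_image_le
    have hcount := card_add_two_mul_card_degree_eq_le
      (fun v ↦ (H.degree_pos_iff_exists_adj v).2 (hH.exists_adj v)) hk
    have hsdiff := le_card_sdiff pruned H.edgeFinset
    rw [hedges]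
    omega

end IsStarForest

end StarForest

/-- The spanning subgraph of `G` formed by the edges outside a set `S` of vertices of the line
graph of `G`. -/
def remainingGraph {V : Type*} {G : SimpleGraph V} (S : Set G.edgeSet) : SimpleGraph V :=
  G.deleteEdges (Subtype.val '' S)

section RemainingGraph

variable {V : Type*} {G H : SimpleGraph V}

lemma edgeSet_remainingGraph (S : Set G.edgeSet) :
    (remainingGraph S).edgeSet = G.edgeSet \ Subtype.val '' S :=
  SimpleGraph.edgeSet_deleteEdges _

lemma remainingGraph_le (S : Set G.edgeSet) : remainingGraph S ≤ G :=
  G.deleteEdges_le _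

lemma remainingGraph_adj {S : Set G.edgeSet} {x y : V} :
    (remainingGraph S).Adj x y ↔ ∃ h : G.Adj x y, ⟨s(x, y), h⟩ ∉ S := by
  simp only [remainingGraph, SimpleGraph.deleteEdges_adj, Set.mem_image, Subtype.exists,
    exists_and_right, exists_eq_right, not_exists]
  exact ⟨fun ⟨h, hS⟩ ↦ ⟨h, hS h⟩, fun ⟨h, hS⟩ ↦ ⟨h, fun _ ↦ hS⟩⟩

lemma preimage_edgeSet_remainingGraph (S : Set G.edgeSet) :
    Subtype.val ⁻¹' (remainingGraph S).edgeSet = Sᶜ := by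
  ext e
  simp [edgeSet_remainingGraph]

lemma remainingGraph_preimage_compl (hHG : H ≤ G) :
    remainingGraph (G := G) (Subtype.val ⁻¹' H.edgeSetᶜ) = H := by
  rw [remainingGraph, Subtype.image_preimage_coe, ← Set.sdiff_eq,
    SimpleGraph.deleteEdges_sdiff_eq_of_le hHG]

end RemainingGraph

section LineGraph

variable {V : Type*} {G : SimpleGraph V}

lemma ncard_lineGraph_neighborSet_inter_add_two {H : SimpleGraph V} [H.LocallyFinite]
    (hHG : H ≤ G) {x y : V} (hxy : H.Adj x y) :
    (G.lineGraph.neighborSet ⟨s(x, y), hHG hxy⟩ ∩ Subtype.val ⁻¹' H.edgeSet).ncard + 2 =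
      H.degree x + H.degree y := by
  classical
  have himage : Subtype.val '' (G.lineGraph.neighborSet ⟨s(x, y), hHG hxy⟩ ∩
      Subtype.val ⁻¹' H.edgeSet) = (H.incidenceSet x ∪ H.incidenceSet y) \ {s(x, y)} := by
    ext e
    have hGe : e ∈ H.edgeSet → e ∈ G.edgeSet := fun he ↦ SimpleGraph.edgeSet_mono hHG he
    simp only [Set.image_val_inter, Subtype.image_preimage_coe, Set.mem_inter_iff, Set.mem_image,
      SimpleGraph.mem_neighborSet, SimpleGraph.lineGraph_adj_iff_exists, ne_eq, Sym2.mem_iff,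
      exists_eq_or_imp, ↓existsAndEq, true_and, Subtype.exists, exists_and_right, exists_eq_right,
      SimpleGraph.incidenceSet, Set.mem_sdiff, Set.mem_union, Set.mem_ofPred_eq,
      Set.mem_singleton_iff]
    grind
  have hincidence (v : V) : (H.incidenceSet v).ncard = H.degree v := by
    rw [← H.card_incidenceSet_eq_degree, Set.ncard_eq_toFinset_card', Set.toFinset_card]
  have hunion := Set.ncard_union_add_ncard_inter (H.incidenceSet x) (H.incidenceSet y)
  rw [H.incidenceSet_inter_incidenceSet_of_adj hxy, Set.ncard_singleton, hincidence, hincidence]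
    at hunion
  have hmem : s(x, y) ∈ H.incidenceSet x ∪ H.incidenceSet y :=
    .inl ((H.mk'_mem_incidenceSet_left_iff).2 hxy)
  have hdiff := Set.ncard_sdiff_singleton_add_one hmem
  rw [← Set.ncard_image_of_injective _ Subtype.val_injective, himage]
  omega

variable [Fintype V] [DecidableRel G.Adj] (S : Set G.edgeSet) [DecidableRel (remainingGraph S).Adj]

lemma ncard_add_card_edgeFinset_remainingGraph :
    S.ncard + #(remainingGraph S).edgeFinset = #G.edgeFinset := by
  have hsub : Subtype.val '' S ⊆ G.edgeSet := Subtype.coe_image_subset _ S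
  rw [← Set.ncard_image_of_injective S Subtype.val_injective, ← Set.ncard_coe_finset,
    ← Set.ncard_coe_finset, SimpleGraph.coe_edgeFinset, SimpleGraph.coe_edgeFinset,
    edgeSet_remainingGraph, add_comm, Set.ncard_sdiff_add_ncard_of_subset hsub]

lemma ncard_sdiff_add_le_lineGraph_iff {x y : V} (hxy : G.Adj x y)
    (hS : ⟨s(x, y), hxy⟩ ∉ S) (r : ℕ) :
    (G.lineGraph.neighborSet ⟨s(x, y), hxy⟩ \ S).ncard + r ≤
        (G.lineGraph.neighborSet ⟨s(x, y), hxy⟩ ∩ S).ncard ↔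
      2 * ((remainingGraph S).degree x + (remainingGraph S).degree y) + r ≤
        G.degree x + G.degree y + 2 := by
  have hrem : (remainingGraph S).Adj x y := remainingGraph_adj.2 ⟨hxy, hS⟩
  have hout := ncard_lineGraph_neighborSet_inter_add_two (remainingGraph_le S) hrem
  have hall := ncard_lineGraph_neighborSet_inter_add_two le_rfl hxy
  rw [preimage_edgeSet_remainingGraph, ← Set.sdiff_eq] at hout
  rw [Subtype.coe_preimage_self, Set.inter_univ] at hall
  have hsplit :=
    Set.ncard_inter_add_ncard_sdiff_eq_ncard (G.lineGraph.neighborSet ⟨s(x, y), hxy⟩) S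
  omega

lemma forall_ncard_sdiff_add_le_lineGraph_iff (r : ℕ) :
    (∀ e ∉ S, (G.lineGraph.neighborSet e \ S).ncard + r ≤
        (G.lineGraph.neighborSet e ∩ S).ncard) ↔
      ∀ x y, (remainingGraph S).Adj x y →
        2 * ((remainingGraph S).degree x + (remainingGraph S).degree y) + r ≤
          G.degree x + G.degree y + 2 := by
  constructor
  · intro hoff x y hxy
    obtain ⟨hG, hS⟩ := remainingGraph_adj.1 hxy
    exact (ncard_sdiff_add_le_lineGraph_iff S hG hS r).1 (hoff _ hS)
  · rintro hdeg ⟨⟨x, y⟩, hG⟩ hS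
    have hxy : (remainingGraph S).Adj x y := remainingGraph_adj.2 ⟨hG, hS⟩
    exact (ncard_sdiff_add_le_lineGraph_iff S hG hS r).2 (hdeg x y hxy)

variable {S} {d : ℕ}

lemma isGlobalOffensiveAlliance_lineGraph_iff (hreg : G.IsRegularOfDegree d) :
    G.lineGraph.IsGlobalOffensiveAlliance S ↔ S.Nonempty ∧ ∀ x y, (remainingGraph S).Adj x y →
      (remainingGraph S).degree x + (remainingGraph S).degree y ≤ d := by
  have hround (m : ℕ) : 2 * m + 1 ≤ d + d + 2 ↔ m ≤ d := by omega
  simp only [SimpleGraph.IsGlobalOffensiveAlliance, forall_ncard_sdiff_add_le_lineGraph_iff,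
    hreg.degree_eq, hround]

lemma isGlobalStrongOffensiveAlliance_lineGraph_iff_isGlobalOffensiveAlliance
    (hreg : G.IsRegularOfDegree d) {S : Set G.edgeSet} :
    G.lineGraph.IsGlobalStrongOffensiveAlliance S ↔ G.lineGraph.IsGlobalOffensiveAlliance S := by
  classical
  have hcancel (m : ℕ) : 2 * m + 2 ≤ d + d + 2 ↔ m ≤ d := by omega
  simp only [isGlobalOffensiveAlliance_lineGraph_iff hreg,
    SimpleGraph.IsGlobalStrongOffensiveAlliance, forall_ncard_sdiff_add_le_lineGraph_iff,
    hreg.degree_eq, hcancel]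

lemma globalStrongOffensiveAllianceNum_lineGraph_eq (hreg : G.IsRegularOfDegree d) :
    G.lineGraph.globalStrongOffensiveAllianceNum = G.lineGraph.globalOffensiveAllianceNum := by
  simp only [SimpleGraph.globalStrongOffensiveAllianceNum, SimpleGraph.globalOffensiveAllianceNum,
    isGlobalStrongOffensiveAlliance_lineGraph_iff_isGlobalOffensiveAlliance hreg]

lemma mul_card_le_four_mul_ncard_of_degree_add_degree_le (hreg : G.IsRegularOfDegree d)
    (hS : ∀ x y, (remainingGraph S).Adj x y →
      (remainingGraph S).degree x + (remainingGraph S).degree y ≤ d) :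
    d * Fintype.card V ≤ 4 * S.ncard := by
  have hrem := four_mul_card_edgeFinset_le_mul_card hS
  have hsplit := ncard_add_card_edgeFinset_remainingGraph S
  have hedges := two_mul_card_edgeFinset_of_isRegularOfDegree hreg
  omega

lemma exists_isGlobalOffensiveAlliance_lineGraph [Nonempty V] (hreg : G.IsRegularOfDegree d)
    (hd : 3 ≤ d) :
    ∃ S, G.lineGraph.IsGlobalOffensiveAlliance S ∧
      2 * S.ncard + Fintype.card V ≤ d * Fintype.card V := by
  classical
  have hadj (v : V) : ∃ w, G.Adj v w :=
    (G.degree_pos_iff_exists_adj v).1 (by rw [hreg.degree_eq]; omega)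
  obtain ⟨F, hFG, hF⟩ := exists_le_isStarForest hadj
  obtain ⟨H, hHF, hsum, hcard⟩ := hF.exists_le_degree_add_degree_le
    (fun v ↦ (SimpleGraph.degree_le_of_le hFG).trans (hreg.degree_eq v).le) hd
  obtain ⟨S, rfl⟩ : ∃ S : Set G.edgeSet, remainingGraph S = H :=
    ⟨_, remainingGraph_preimage_compl (hHF.trans hFG)⟩
  have hlower := mul_card_le_four_mul_ncard_of_degree_add_degree_le hreg hsum
  have hpos : 0 < d * Fintype.card V := Nat.mul_pos (by omega) Fintype.card_pos
  have hnonempty : S.Nonempty := Set.nonempty_of_ncard_ne_zero (by omega)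
  refine ⟨S, (isGlobalOffensiveAlliance_lineGraph_iff hreg).2 ⟨hnonempty, hsum⟩, ?_⟩
  have hsplit := ncard_add_card_edgeFinset_remainingGraph S
  have hedges := two_mul_card_edgeFinset_of_isRegularOfDegree hreg
  omega

end LineGraph

theorem stmt_7_general {V : Type*} [Fintype V] [Nonempty V] (G : SimpleGraph V) {d : ℕ}
    (hd : 3 ≤ d) (hreg : ∀ v : V, (G.neighborSet v).ncard = d) :
    d * (Fintype.card V : ℝ) / 4 ≤ G.lineGraph.globalStrongOffensiveAllianceNum ∧
      G.lineGraph.globalStrongOffensiveAllianceNum =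
        G.lineGraph.globalOffensiveAllianceNum ∧
      (G.lineGraph.globalOffensiveAllianceNum : ℝ) ≤ (d - 1) * Fintype.card V / 2 := by
  classical
  have hreg' : G.IsRegularOfDegree d := fun v ↦ by
    rw [← hreg v, Set.ncard_eq_toFinset_card', SimpleGraph.degree, SimpleGraph.neighborFinset]
  have heq := globalStrongOffensiveAllianceNum_lineGraph_eq hreg'
  obtain ⟨S, hS, hupper⟩ := exists_isGlobalOffensiveAlliance_lineGraph hreg' hd
  have hnum := globalOffensiveAllianceNum_le_ncard hS
  have : Nonempty G.edgeSet := hS.1.to_type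
  obtain ⟨T, hT, hTcard⟩ := exists_isGlobalOffensiveAlliance_ncard_eq G.lineGraph
  have hlower := mul_card_le_four_mul_ncard_of_degree_add_degree_le hreg'
    ((isGlobalOffensiveAlliance_lineGraph_iff hreg').1 hT).2
  rw [hTcard] at hlower
  rify at hupper hnum hlower
  exact ⟨by rw [heq]; linarith, heq, by linarith⟩

theorem stmt_7 {V : Type*} [Fintype V] (G : SimpleGraph V)
    (hconn : G.Connected) (hcubic : ∀ v : V, (G.neighborSet v).ncard = 3) :
    3 * (Fintype.card V : ℝ) / 4 ≤ G.lineGraph.globalStrongOffensiveAllianceNum ∧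
      G.lineGraph.globalStrongOffensiveAllianceNum =
        G.lineGraph.globalOffensiveAllianceNum ∧
      (G.lineGraph.globalOffensiveAllianceNum : ℝ) ≤ Fintype.card V := by
  have := hconn.nonempty
  obtain ⟨hlower, heq, hupper⟩ := stmt_7_general G le_rfl hcubic
  exact ⟨mod_cast hlower, heq, hupper.trans_eq (by norm_num)⟩
end

section
/- Let Γ be a connected δ-regular finite simple graph of order n with δ odd. Then n(δ+1)/(3δ+1) ≤ γ_o(Γ) ≤ n/2, where γ_o(Γ) is the global offensive alliance number of Γ. -/
/-!
Upper bound: if `(S, Sᶜ)` is a maximum cut, then moving a vertex to the other side does not enlarge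
the cut, so each vertex has at least as many neighbors across the cut as on its own side. When all
degrees are odd there are no ties, so both sides are global offensive alliances, and one of them
has at most `n / 2` vertices.

Lower bound: count the edges between an alliance `S` and `Sᶜ` in a graph of minimum degree `δ` and
maximum degree `Δ`. There are at most `Δ |S|` of them, and at least `(δ + 1) / 2` for each of the
`n - |S|` vertices outside `S`.
-/

open Finset

section Interedges

variable {V : Type*} (G : SimpleGraph V)

theorem card_neighborFinset_sdiff_add_card_inter [DecidableEq V] [G.LocallyFinite] (v : V)
    (S : Finset V) : #(G.neighborFinset v \ S) + #(G.neighborFinset v ∩ S) = G.degree v :=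
  card_sdiff_add_card_inter _ _

variable [DecidableRel G.Adj]

theorem card_interedges_comm (S T : Finset V) : #(G.interedges S T) = #(G.interedges T S) :=
  have : Std.Symm G.Adj := G.symm
  Rel.card_interedges_comm S T

variable [DecidableEq V] [G.LocallyFinite]

theorem card_interedges_eq_sum (S T : Finset V) :
    #(G.interedges S T) = ∑ v ∈ S, #(G.neighborFinset v ∩ T) := by
  rw [SimpleGraph.interedges_def, card_filter, sum_product]
  refine sum_congr rfl fun v _ ↦ ?_
  rw [← card_filter]
  congr 1
  ext w
  simp [and_comm]

theorem card_interedges_insert_left {v : V} {S : Finset V} (hv : v ∉ S) (T : Finset V) :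
    #(G.interedges (insert v S) T) = #(G.neighborFinset v ∩ T) + #(G.interedges S T) := by
  simp only [card_interedges_eq_sum, sum_insert hv]

theorem card_interedges_insert_right (S : Finset V) {v : V} {T : Finset V} (hv : v ∉ T) :
    #(G.interedges S (insert v T)) = #(G.neighborFinset v ∩ S) + #(G.interedges S T) := by
  rw [card_interedges_comm, card_interedges_insert_left G hv, card_interedges_comm]

end Interedges

section MaxCut

variable {V : Type*} [Fintype V] [DecidableEq V] (G : SimpleGraph V) [DecidableRel G.Adj]

/-- The size of the cut `(S, Sᶜ)`: the number of edges of `G` with exactly one end in `S`. -/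
def cutSize (S : Finset V) : ℕ := #(G.interedges S Sᶜ)

/-- `S` is one side of a maximum cut of `G`. -/
def IsMaxCut (S : Finset V) : Prop := ∀ T, cutSize G T ≤ cutSize G S

theorem cutSize_compl (S : Finset V) : cutSize G Sᶜ = cutSize G S := by
  rw [cutSize, cutSize, compl_compl, card_interedges_comm]

theorem cutSize_insert_add {v : V} {S : Finset V} (hv : v ∉ S) :
    cutSize G (insert v S) + #(G.neighborFinset v ∩ S) =
      cutSize G S + #(G.neighborFinset v \ S) := by
  have compl_eq : Sᶜ = insert v (insert v S)ᶜ := by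
    rw [compl_insert, insert_erase (mem_compl.2 hv)]
  have inter_eq : G.neighborFinset v ∩ (insert v S)ᶜ = G.neighborFinset v \ S := by
    rw [← inf_eq_inter, ← sdiff_eq, sdiff_insert, erase_eq_of_notMem (by simp)]
  have cut_insert : cutSize G (insert v S) =
      #(G.neighborFinset v \ S) + #(G.interedges S (insert v S)ᶜ) := by
    rw [cutSize, card_interedges_insert_left G hv, inter_eq]
  have cut_self : cutSize G S =
      #(G.neighborFinset v ∩ S) + #(G.interedges S (insert v S)ᶜ) := by
    rw [cutSize, compl_eq, card_interedges_insert_right G S (by simp)]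
  omega

theorem cutSize_le_card_mul_maxDegree (S : Finset V) :
    cutSize G S ≤ #S * G.maxDegree := by
  rw [cutSize, card_interedges_eq_sum, ← smul_eq_mul]
  refine sum_le_card_nsmul _ _ _ fun v _ ↦ ?_
  exact (card_le_card inter_subset_left).trans (G.degree_le_maxDegree v)

theorem exists_isMaxCut : ∃ S, IsMaxCut G S :=
  Finite.exists_max (cutSize G)

variable {G}

theorem IsMaxCut.compl {S : Finset V} (hS : IsMaxCut G S) : IsMaxCut G Sᶜ := fun T ↦
  (hS T).trans_eq (cutSize_compl G S).symm

theorem IsMaxCut.card_sdiff_le_card_inter {S : Finset V} (hS : IsMaxCut G S) {v : V} (hv : v ∉ S) :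
    #(G.neighborFinset v \ S) ≤ #(G.neighborFinset v ∩ S) := by
  have insert_le := hS (insert v S)
  have insert_add := cutSize_insert_add G hv
  omega

theorem IsMaxCut.card_sdiff_lt_card_inter {S : Finset V} (hS : IsMaxCut G S) {v : V} (hv : v ∉ S)
    (hodd : Odd (G.degree v)) : #(G.neighborFinset v \ S) < #(G.neighborFinset v ∩ S) := by
  refine (hS.card_sdiff_le_card_inter hv).lt_of_ne fun tie ↦ ?_
  rw [← card_neighborFinset_sdiff_add_card_inter G v S, tie] at hodd
  exact Nat.not_odd_iff_even.2 (Even.add_self _) hodd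

end MaxCut

section Alliance

variable {V : Type*} {G : SimpleGraph V}

theorem isGlobalOffensiveAlliance_coe_iff [DecidableEq V] [G.LocallyFinite] {S : Finset V} :
    G.IsGlobalOffensiveAlliance (S : Set V) ↔
      S.Nonempty ∧ ∀ v ∉ S, #(G.neighborFinset v \ S) < #(G.neighborFinset v ∩ S) := by
  simp only [SimpleGraph.IsGlobalOffensiveAlliance, ← SimpleGraph.coe_neighborFinset, ← coe_sdiff,
    ← coe_inter, Set.ncard_coe_finset, coe_nonempty, mem_coe, Nat.succ_le_iff]

theorem IsMaxCut.isGlobalOffensiveAlliance [Fintype V] [Nonempty V] [DecidableEq V]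
    [DecidableRel G.Adj] {S : Finset V} (hS : IsMaxCut G S) (hodd : ∀ v, Odd (G.degree v)) :
    G.IsGlobalOffensiveAlliance (S : Set V) := by
  have majority (v : V) (hv : v ∉ S) := hS.card_sdiff_lt_card_inter hv (hodd v)
  refine isGlobalOffensiveAlliance_coe_iff.2 ⟨?_, majority⟩
  rw [nonempty_iff_ne_empty]
  rintro rfl
  simpa using majority (Classical.arbitrary V) (notMem_empty _)

theorem globalOffensiveAllianceNum_le_card {S : Finset V}
    (hS : G.IsGlobalOffensiveAlliance (S : Set V)) : G.globalOffensiveAllianceNum ≤ #S :=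
  Nat.sInf_le ⟨S, hS, Set.ncard_coe_finset S⟩

variable (G) in
theorem exists_isGlobalOffensiveAlliance_card_eq [Finite V] [Nonempty V] :
    ∃ S : Finset V, G.IsGlobalOffensiveAlliance (S : Set V) ∧
      #S = G.globalOffensiveAllianceNum := by
  have univ_alliance : G.IsGlobalOffensiveAlliance Set.univ :=
    ⟨Set.univ_nonempty, fun v hv ↦ (hv (Set.mem_univ v)).elim⟩
  obtain ⟨S, hS, hcard⟩ : G.globalOffensiveAllianceNum ∈
      {k | ∃ S : Set V, G.IsGlobalOffensiveAlliance S ∧ S.ncard = k} :=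
    Nat.sInf_mem ⟨_, Set.univ, univ_alliance, rfl⟩
  lift S to Finset V using S.toFinite
  exact ⟨S, hS, by rw [← hcard, Set.ncard_coe_finset]⟩

variable [Fintype V] [DecidableRel G.Adj]

theorem globalOffensiveAllianceNum_mul_two_le_card [Nonempty V]
    (hodd : ∀ v, Odd (G.degree v)) :
    G.globalOffensiveAllianceNum * 2 ≤ Fintype.card V := by
  classical
  obtain ⟨S, hS⟩ := exists_isMaxCut G
  have le_card := globalOffensiveAllianceNum_le_card (hS.isGlobalOffensiveAlliance hodd)
  have le_card_compl := globalOffensiveAllianceNum_le_card (hS.compl.isGlobalOffensiveAlliance hodd)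
  have card_add := card_add_card_compl S
  omega

theorem card_compl_mul_le_two_mul_cutSize [DecidableEq V] {S : Finset V}
    (hS : G.IsGlobalOffensiveAlliance (S : Set V)) :
    #Sᶜ * (G.minDegree + 1) ≤ 2 * cutSize G S := by
  rw [cutSize, card_interedges_comm, card_interedges_eq_sum, mul_sum, ← smul_eq_mul]
  refine card_nsmul_le_sum _ _ _ fun v hv ↦ ?_
  have majority := (isGlobalOffensiveAlliance_coe_iff.1 hS).2 v (mem_compl.1 hv)
  have degree_eq := card_neighborFinset_sdiff_add_card_inter G v S
  have minDegree_le := G.minDegree_le_degree v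
  omega

theorem card_mul_le_card_alliance_mul {S : Finset V}
    (hS : G.IsGlobalOffensiveAlliance (S : Set V)) :
    Fintype.card V * (G.minDegree + 1) ≤ #S * (2 * G.maxDegree + G.minDegree + 1) := by
  classical
  calc Fintype.card V * (G.minDegree + 1)
      = #S * (G.minDegree + 1) + #Sᶜ * (G.minDegree + 1) := by
        rw [← add_mul, card_add_card_compl]
    _ ≤ #S * (G.minDegree + 1) + 2 * cutSize G S :=
        Nat.add_le_add_left (card_compl_mul_le_two_mul_cutSize hS) _
    _ ≤ #S * (G.minDegree + 1) + 2 * (#S * G.maxDegree) := by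
        gcongr
        exact cutSize_le_card_mul_maxDegree G S
    _ = #S * (2 * G.maxDegree + G.minDegree + 1) := by ring

end Alliance

theorem isRegularOfDegree_iff_ncard_neighborSet {V : Type*} {G : SimpleGraph V}
    [G.LocallyFinite] {δ : ℕ} :
    G.IsRegularOfDegree δ ↔ ∀ v, (G.neighborSet v).ncard = δ := by
  simp only [SimpleGraph.IsRegularOfDegree, ← SimpleGraph.coe_neighborFinset,
    Set.ncard_coe_finset, SimpleGraph.card_neighborFinset_eq_degree]

theorem stmt_9_general {V : Type*} [Fintype V] [Nonempty V] (G : SimpleGraph V)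
    [DecidableRel G.Adj] (hodd : ∀ v, Odd (G.degree v)) :
    (Fintype.card V : ℝ) * (G.minDegree + 1) / (2 * G.maxDegree + G.minDegree + 1) ≤
        G.globalOffensiveAllianceNum ∧
      (G.globalOffensiveAllianceNum : ℝ) ≤ Fintype.card V / 2 := by
  constructor
  · obtain ⟨S, hS, hcard⟩ := exists_isGlobalOffensiveAlliance_card_eq G
    rw [div_le_iff₀ (by positivity), ← hcard]
    exact_mod_cast card_mul_le_card_alliance_mul hS
  · rw [le_div_iff₀ two_pos]
    exact_mod_cast globalOffensiveAllianceNum_mul_two_le_card hodd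

theorem stmt_9 {V : Type*} [Fintype V] (G : SimpleGraph V) (δ : ℕ)
    (hconn : G.Connected) (hreg : ∀ v : V, (G.neighborSet v).ncard = δ) (hδ : Odd δ) :
    (Fintype.card V : ℝ) * (δ + 1) / (3 * δ + 1) ≤ G.globalOffensiveAllianceNum ∧
      (G.globalOffensiveAllianceNum : ℝ) ≤ Fintype.card V / 2 := by
  classical
  have := hconn.nonempty
  have regular : G.IsRegularOfDegree δ := isRegularOfDegree_iff_ncard_neighborSet.2 hreg
  have three_mul_eq : (3 * δ + 1 : ℝ) = 2 * δ + δ + 1 := by ring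
  rw [three_mul_eq]
  simpa only [regular.minDegree_eq, regular.maxDegree_eq] using
    stmt_9_general G fun v ↦ (regular v).symm ▸ hδ
end

section
/- Let Γ be a connected cubic graph of order n. Then every global offensive alliance in Γ of cardinality 2n/5 is an independent set. -/
/-!
Suppose degrees are at least `δ` outside `S` and at most `Δ` inside, and count the edges between
`S` and its complement. Each vertex outside `S` sends at least `k = ⌊δ / 2⌋ + 1` edges into `S`,
and each vertex of `S` sends at most `Δ` edges out, so `k (n - |S|) ≤ Δ |S|`. An edge inside `S`
makes this inequality strict, which contradicts `(Δ + k) |S| ≤ k n`. For cubic graphs `Δ = 3` and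
`k = 2`, whence the threshold `2n / 5`.
-/

theorem sum_ncard_neighborSet_inter_comm {V : Type*} (G : SimpleGraph V) (s t : Finset V) :
    ∑ a ∈ s, (G.neighborSet a ∩ t).ncard = ∑ b ∈ t, (G.neighborSet b ∩ s).ncard := by
  classical
  have ncard_eq (v : V) (u : Finset V) :
      (G.neighborSet v ∩ u).ncard = (u.bipartiteAbove G.Adj v).card := by
    rw [← Set.ncard_coe_finset, Finset.bipartiteAbove, Finset.coe_filter, Set.inter_comm]
    rfl
  have bipartiteBelow_eq (v : V) : s.bipartiteBelow G.Adj v = s.bipartiteAbove G.Adj v := by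
    simp only [Finset.bipartiteBelow, Finset.bipartiteAbove, G.adj_comm]
  simp only [ncard_eq, ← bipartiteBelow_eq]
  exact Finset.sum_card_bipartiteAbove_eq_sum_card_bipartiteBelow G.Adj

section

variable {V : Type*} {G : SimpleGraph V} {S : Set V}

theorem ncard_neighborSet_lt_two_mul_of_isGlobalOffensiveAlliance
    (hS : G.IsGlobalOffensiveAlliance S) {v : V} (hv : v ∉ S) (hfin : (G.neighborSet v).Finite) :
    (G.neighborSet v).ncard < 2 * (G.neighborSet v ∩ S).ncard := by
  have hsplit := Set.ncard_inter_add_ncard_sdiff_eq_ncard (G.neighborSet v) S hfin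
  have hoff := hS.2 v hv
  omega

theorem ncard_neighborSet_sdiff_lt_of_adj {u v : V} (hv : v ∈ S) (huv : G.Adj u v)
    (hfin : (G.neighborSet u).Finite) :
    (G.neighborSet u \ S).ncard < (G.neighborSet u).ncard :=
  Set.ncard_lt_ncard ⟨Set.sdiff_subset, fun h => (h huv).2 hv⟩ hfin

variable [Finite V]

theorem mul_ncard_compl_lt_mul_ncard_of_adj {k Δ : ℕ}
    (hk : ∀ b ∉ S, k ≤ (G.neighborSet b ∩ S).ncard)
    (hΔ : ∀ a ∈ S, (G.neighborSet a).ncard ≤ Δ)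
    {u v : V} (hu : u ∈ S) (hv : v ∈ S) (huv : G.Adj u v) :
    k * Sᶜ.ncard < Δ * S.ncard := by
  lift S to Finset V using S.toFinite
  lift (↑S : Set V)ᶜ to Finset V using Set.toFinite _ with T hT
  have hlower : ∀ b ∈ T, k ≤ (G.neighborSet b ∩ S).ncard := fun b hb =>
    hk b (hT.subset hb)
  have hupper : ∀ a ∈ S, (G.neighborSet a ∩ T).ncard ≤ Δ := fun a ha =>
    (Set.ncard_le_ncard Set.inter_subset_left).trans (hΔ a ha)
  have hstrict : (G.neighborSet u ∩ T).ncard < Δ := by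
    rw [hT, ← Set.sdiff_eq]
    exact (ncard_neighborSet_sdiff_lt_of_adj hv huv (Set.toFinite _)).trans_le (hΔ u hu)
  calc k * (T : Set V).ncard = ∑ _b ∈ T, k := by
        rw [Set.ncard_coe_finset, Finset.sum_const, smul_eq_mul, mul_comm]
    _ ≤ ∑ b ∈ T, (G.neighborSet b ∩ S).ncard := Finset.sum_le_sum hlower
    _ = ∑ a ∈ S, (G.neighborSet a ∩ T).ncard := sum_ncard_neighborSet_inter_comm G T S
    _ < ∑ _a ∈ S, Δ := Finset.sum_lt_sum hupper ⟨u, hu, hstrict⟩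
    _ = Δ * (S : Set V).ncard := by
        rw [Set.ncard_coe_finset, Finset.sum_const, smul_eq_mul, mul_comm]

theorem stmt_11_general {δ Δ : ℕ} (hS : G.IsGlobalOffensiveAlliance S)
    (hδ : ∀ v ∉ S, δ ≤ (G.neighborSet v).ncard)
    (hΔ : ∀ v ∈ S, (G.neighborSet v).ncard ≤ Δ)
    (hcard : (Δ + (δ / 2 + 1)) * S.ncard ≤ (δ / 2 + 1) * Nat.card V) :
    G.IsIndepVertexSet S := by
  intro u hu v hv _ huv
  have hk : ∀ b ∉ S, δ / 2 + 1 ≤ (G.neighborSet b ∩ S).ncard := by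
    intro b hb
    have hmajority := ncard_neighborSet_lt_two_mul_of_isGlobalOffensiveAlliance hS hb
      (Set.toFinite _)
    have hdegree := hδ b hb
    omega
  have hlt := mul_ncard_compl_lt_mul_ncard_of_adj hk hΔ hu hv huv
  rw [← Set.ncard_add_ncard_compl S] at hcard
  linarith

end

theorem stmt_11 {V : Type*} [Fintype V] (G : SimpleGraph V)
    (hconn : G.Connected) (hcubic : ∀ v : V, (G.neighborSet v).ncard = 3) :
    ∀ S : Set V, G.IsGlobalOffensiveAlliance S →
      (S.ncard : ℝ) = 2 * Fintype.card V / 5 → G.IsIndepVertexSet S := by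
  intro S hS hcard
  refine stmt_11_general (δ := 3) (Δ := 3) hS (fun v _ => (hcubic v).ge)
    (fun v _ => (hcubic v).le) ?_
  rw [Nat.card_eq_fintype_card]
  rify
  linarith
end

section
/- Let Γ be a connected cubic graph of order n that has a global independent offensive alliance. Then 2n/5 ≤ γ_i(Γ) ≤ n/2, where γ_i(Γ) is the global independent offensive alliance number of Γ. -/
/-- The *global independent offensive alliance number*: the minimum cardinality of a global
offensive alliance which is also an independent set. -/
noncomputable def SimpleGraph.globalIndepOffensiveAllianceNum {V : Type*}
    (G : SimpleGraph V) : ℕ :=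
  sInf {k | ∃ S : Set V,
    G.IsGlobalOffensiveAlliance S ∧ G.IsIndepVertexSet S ∧ S.ncard = k}

/-!
Count the edges between `S` and its complement. Independence sends all edges at `S` across the cut,
and the alliance condition sends more than half of the edges at each vertex outside `S` across it.
In a cubic graph the cut has exactly `3 |S|` edges, between `2 (n - |S|)` and `3 (n - |S|)`.
-/

section

variable {V : Type*} {G : SimpleGraph V} {S T : Set V} {δ Δ : ℕ}

theorem ncard_mul_le_ncard_mul_of_ncard_neighborSet_inter {m n : ℕ} (hS : S.Finite) (hT : T.Finite)
    (hm : ∀ v ∈ S, m ≤ (G.neighborSet v ∩ T).ncard)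
    (hn : ∀ w ∈ T, (G.neighborSet w ∩ S).ncard ≤ n) :
    S.ncard * m ≤ T.ncard * n := by
  classical
  lift S to Finset V using hS
  lift T to Finset V using hT
  have coe_above (v : V) : (T.bipartiteAbove G.Adj v : Set V) = G.neighborSet v ∩ T := by
    ext w
    simp [and_comm]
  have coe_below (w : V) : (S.bipartiteBelow G.Adj w : Set V) = G.neighborSet w ∩ S := by
    ext v
    simp [G.adj_comm, and_comm]
  simp only [Set.ncard_coe_finset]
  refine Finset.card_mul_le_card_mul G.Adj (fun v hv => ?_) (fun w hw => ?_)
  · rw [← Set.ncard_coe_finset, coe_above]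
    exact hm v hv
  · rw [← Set.ncard_coe_finset, coe_below]
    exact hn w hw

theorem neighborSet_subset_compl_of_isIndepVertexSet (hI : G.IsIndepVertexSet S) {v : V}
    (hv : v ∈ S) : G.neighborSet v ⊆ Sᶜ :=
  fun _ hvw hw => hI hv hw (G.ne_of_adj hvw) hvw

theorem half_ncard_neighborSet_lt_ncard_inter [Finite V] (hS : G.IsGlobalOffensiveAlliance S)
    {v : V} (hv : v ∉ S) : (G.neighborSet v).ncard / 2 < (G.neighborSet v ∩ S).ncard := by
  have inside_add_outside := Set.ncard_inter_add_ncard_sdiff_eq_ncard (G.neighborSet v) S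
  have outside_lt_inside := hS.2 v hv
  omega

theorem add_mul_ncard_le_mul_card_of_isIndepVertexSet [Finite V] (hI : G.IsIndepVertexSet S)
    (hδ : ∀ v ∈ S, δ ≤ (G.neighborSet v).ncard) (hΔ : ∀ v ∉ S, (G.neighborSet v).ncard ≤ Δ) :
    (δ + Δ) * S.ncard ≤ Δ * Nat.card V := by
  have cut_count : S.ncard * δ ≤ Sᶜ.ncard * Δ := by
    refine ncard_mul_le_ncard_mul_of_ncard_neighborSet_inter (G := G) S.toFinite Sᶜ.toFinite
      (fun v hv => ?_) fun v hv => (Set.ncard_inter_le_ncard_left _ _).trans (hΔ v hv)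
    rw [Set.inter_eq_left.2 (neighborSet_subset_compl_of_isIndepVertexSet hI hv)]
    exact hδ v hv
  rw [← Set.ncard_add_ncard_compl S]
  linarith

theorem mul_card_le_add_mul_ncard_of_isGlobalOffensiveAlliance [Finite V]
    (hS : G.IsGlobalOffensiveAlliance S)
    (hδ : ∀ v ∉ S, δ ≤ (G.neighborSet v).ncard) (hΔ : ∀ v ∈ S, (G.neighborSet v).ncard ≤ Δ) :
    (δ / 2 + 1) * Nat.card V ≤ (Δ + (δ / 2 + 1)) * S.ncard := by
  have cut_count : Sᶜ.ncard * (δ / 2 + 1) ≤ S.ncard * Δ :=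
    ncard_mul_le_ncard_mul_of_ncard_neighborSet_inter (G := G) Sᶜ.toFinite S.toFinite
      (fun v hv => (Nat.div_le_div_right (hδ v hv)).trans_lt
        (half_ncard_neighborSet_lt_ncard_inter hS hv))
      fun v hv => (Set.ncard_inter_le_ncard_left _ _).trans (hΔ v hv)
  rw [← Set.ncard_add_ncard_compl S]
  linarith

theorem exists_ncard_eq_globalIndepOffensiveAllianceNum
    (hex : ∃ S : Set V, G.IsGlobalOffensiveAlliance S ∧ G.IsIndepVertexSet S) :
    ∃ S : Set V, G.IsGlobalOffensiveAlliance S ∧ G.IsIndepVertexSet S ∧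
      S.ncard = G.globalIndepOffensiveAllianceNum :=
  let ⟨S, hS, hI⟩ := hex
  Nat.sInf_mem (s := {k | ∃ S : Set V, G.IsGlobalOffensiveAlliance S ∧ G.IsIndepVertexSet S ∧
    S.ncard = k}) ⟨S.ncard, S, hS, hI, rfl⟩

end

theorem stmt_15_general {V : Type*} [Finite V] (G : SimpleGraph V) {δ Δ : ℕ}
    (hδ : ∀ v : V, δ ≤ (G.neighborSet v).ncard) (hΔ : ∀ v : V, (G.neighborSet v).ncard ≤ Δ)
    (hex : ∃ S : Set V, G.IsGlobalOffensiveAlliance S ∧ G.IsIndepVertexSet S) :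
    (δ / 2 + 1) * Nat.card V ≤ (Δ + (δ / 2 + 1)) * G.globalIndepOffensiveAllianceNum ∧
      (δ + Δ) * G.globalIndepOffensiveAllianceNum ≤ Δ * Nat.card V := by
  obtain ⟨S, hS, hI, hcard⟩ := exists_ncard_eq_globalIndepOffensiveAllianceNum hex
  rw [← hcard]
  exact ⟨mul_card_le_add_mul_ncard_of_isGlobalOffensiveAlliance hS (fun v _ => hδ v)
      fun v _ => hΔ v,
    add_mul_ncard_le_mul_card_of_isIndepVertexSet hI (fun v _ => hδ v) fun v _ => hΔ v⟩

theorem stmt_15 {V : Type*} [Fintype V] (G : SimpleGraph V)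
    (hconn : G.Connected) (hcubic : ∀ v : V, (G.neighborSet v).ncard = 3)
    (hex : ∃ S : Set V, G.IsGlobalOffensiveAlliance S ∧ G.IsIndepVertexSet S) :
    2 * (Fintype.card V : ℝ) / 5 ≤ G.globalIndepOffensiveAllianceNum ∧
      (G.globalIndepOffensiveAllianceNum : ℝ) ≤ Fintype.card V / 2 := by
  have bounds := stmt_15_general G (fun v => (hcubic v).ge) (fun v => (hcubic v).le) hex
  rw [Nat.card_eq_fintype_card] at bounds
  rify at bounds
  constructor <;> linarith
end

section
/- Let Γ be a connected cubic graph of order n. If α(Γ) < 2n/5, where α(Γ) is the independence number of Γ, then Γ contains no global independent offensive alliance. -/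
/-!
Outside an offensive alliance `S`, a vertex of degree at least `δ` has at least `⌊δ / 2⌋ + 1` of its
neighbors in `S`. Counting the edges between `S` and its complement from both sides bounds `S.ncard`
from below: with maximum degree `Δ`, at least the fraction `(⌊δ / 2⌋ + 1) / (Δ + ⌊δ / 2⌋ + 1)`
of all vertices lies in `S`, which is `2 / 5` in a cubic graph. If `S` is moreover independent, this
contradicts the upper bound on the independence number.
-/

section

variable {V : Type*} {G : SimpleGraph V} {S T : Set V} {m k δ Δ : ℕ}

theorem ncard_mul_le_ncard_mul_of_neighborSet (hS : S.Finite)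
    (hT_le : ∀ v ∈ T, m ≤ (G.neighborSet v ∩ S).ncard)
    (hS_le : ∀ u ∈ S, (G.neighborSet u ∩ T).ncard ≤ k) :
    T.ncard * m ≤ S.ncard * k := by
  classical
  obtain hT | hT := T.finite_or_infinite.symm
  · simp [hT.ncard]
  lift S to Finset V using hS
  lift T to Finset V using hT
  have above_eq (v : V) : (S.bipartiteAbove G.Adj v : Set V) = G.neighborSet v ∩ S := by
    ext u
    simp [and_comm]
  have below_eq (u : V) : (T.bipartiteBelow G.Adj u : Set V) = G.neighborSet u ∩ T := by
    ext v
    simp [and_comm, G.adj_comm]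
  simp only [Set.ncard_coe_finset]
  refine Finset.card_mul_le_card_mul G.Adj (fun v hv ↦ ?_) (fun u hu ↦ ?_)
  · simpa only [← above_eq, Set.ncard_coe_finset] using hT_le v hv
  · simpa only [← below_eq, Set.ncard_coe_finset] using hS_le u hu

theorem mul_card_le_mul_ncard_of_forall_notMem [Finite V]
    (hm : ∀ v ∉ S, m ≤ (G.neighborSet v ∩ S).ncard)
    (hΔ : ∀ u ∈ S, (G.neighborSet u).ncard ≤ Δ) :
    m * Nat.card V ≤ (Δ + m) * S.ncard := by
  have edges_le : Sᶜ.ncard * m ≤ S.ncard * Δ :=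
    ncard_mul_le_ncard_mul_of_neighborSet S.toFinite hm fun u hu ↦
      (Set.ncard_le_ncard Set.inter_subset_left (Set.toFinite _)).trans (hΔ u hu)
  calc
    m * Nat.card V = S.ncard * m + Sᶜ.ncard * m := by
      rw [← Set.ncard_add_ncard_compl S]; ring
    _ ≤ S.ncard * m + S.ncard * Δ := by gcongr
    _ = (Δ + m) * S.ncard := by ring

theorem SimpleGraph.IsGlobalOffensiveAlliance.ncard_neighborSet_lt_two_mul
    (hS : G.IsGlobalOffensiveAlliance S) {v : V} (hv : v ∉ S) :
    (G.neighborSet v).ncard < 2 * (G.neighborSet v ∩ S).ncard := by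
  have split_le := Set.ncard_union_le (G.neighborSet v ∩ S) (G.neighborSet v \ S)
  rw [Set.inter_union_sdiff] at split_le
  have majority := hS.2 v hv
  omega

theorem SimpleGraph.IsGlobalOffensiveAlliance.mul_card_le_mul_ncard [Finite V]
    (hS : G.IsGlobalOffensiveAlliance S) (hδ : ∀ v ∉ S, δ ≤ (G.neighborSet v).ncard)
    (hΔ : ∀ u ∈ S, (G.neighborSet u).ncard ≤ Δ) :
    (δ / 2 + 1) * Nat.card V ≤ (Δ + (δ / 2 + 1)) * S.ncard := by
  refine mul_card_le_mul_ncard_of_forall_notMem (fun v hv ↦ ?_) hΔ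
  have degree_lt := hS.ncard_neighborSet_lt_two_mul hv
  have le_degree := hδ v hv
  omega

theorem SimpleGraph.IsIndepVertexSet.ncard_le_indepNumber [Finite V]
    (hS : G.IsIndepVertexSet S) : S.ncard ≤ G.indepNumber := by
  refine le_csSup ⟨Nat.card V, ?_⟩ ⟨S, hS, rfl⟩
  rintro _ ⟨T, -, rfl⟩
  exact T.ncard_le_card

theorem stmt_18_general [Finite V] (hδ : ∀ v, δ ≤ (G.neighborSet v).ncard)
    (hΔ : ∀ v, (G.neighborSet v).ncard ≤ Δ)
    (hα : (Δ + (δ / 2 + 1)) * G.indepNumber < (δ / 2 + 1) * Nat.card V) :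
    ¬ ∃ S : Set V, G.IsGlobalOffensiveAlliance S ∧ G.IsIndepVertexSet S := by
  rintro ⟨S, alliance, indep⟩
  refine hα.not_ge ?_
  calc
    (δ / 2 + 1) * Nat.card V ≤ (Δ + (δ / 2 + 1)) * S.ncard :=
      alliance.mul_card_le_mul_ncard (fun v _ ↦ hδ v) (fun u _ ↦ hΔ u)
    _ ≤ (Δ + (δ / 2 + 1)) * G.indepNumber := by
      gcongr
      exact indep.ncard_le_indepNumber

end

theorem stmt_18 {V : Type*} [Fintype V] (G : SimpleGraph V)
    (hconn : G.Connected) (hcubic : ∀ v : V, (G.neighborSet v).ncard = 3)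
    (hα : (G.indepNumber : ℝ) < 2 * Fintype.card V / 5) :
    ¬ ∃ S : Set V, G.IsGlobalOffensiveAlliance S ∧ G.IsIndepVertexSet S := by
  have five_mul_lt : 5 * G.indepNumber < 2 * Fintype.card V := by
    exact_mod_cast (lt_div_iff₀' (by norm_num)).mp hα
  exact stmt_18_general (fun v ↦ (hcubic v).ge) (fun v ↦ (hcubic v).le) (by simpa using five_mul_lt)
end
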